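/- arXiv:math/0201165 — 5 statements merged into one kernel-verified Lean document; each statement's English description precedes it below -/
import Mathlib

section
/- Let a and b be natural numbers, let A be an invertible a × a complex matrix and B an invertible b × b complex matrix. If trace(A^n) = trace(B^n) for every integer n ≥ 1, then a = b. -/
open Matrix

lemma trace_aeval_aux (a : ℕ) (A : Matrix (Fin a) (Fin a) ℂ) (p : Polynomial ℂ) :
    (Polynomial.aeval A p).trace =
      (∑ i ∈ Finset.range p.natDegree, p.coeff (i + 1) * (A ^ (i + 1)).trace)
        + p.coeff 0 * a := by
  rw [Polynomial.aeval_eq_sum_range, Finset.sum_range_succ', Matrix.trace_add, Matrix.trace_sum]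
  simp [Matrix.trace_smul]

lemma charpoly_coeff_zero_aux (a : ℕ) (A : Matrix (Fin a) (Fin a) ℂ) (hA : IsUnit A) :
    A.charpoly.coeff 0 ≠ 0 := by
  intro h0
  have hd : A.det ≠ 0 := ((Matrix.isUnit_iff_isUnit_det A).1 hA).ne_zero
  apply hd
  rw [Matrix.det_eq_sign_charpoly_coeff, h0, mul_zero]

/-- If `A ∈ GL(a, ℂ)` and `B ∈ GL(b, ℂ)` satisfy `trace (A ^ n) = trace (B ^ n)` for all
`n ≥ 1`, then `a = b`. -/
theorem stmt_6 (a b : ℕ) (A : Matrix (Fin a) (Fin a) ℂ) (B : Matrix (Fin b) (Fin b) ℂ)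
    (hA : IsUnit A) (hB : IsUnit B)
    (h : ∀ n : ℕ, 1 ≤ n → (A ^ n).trace = (B ^ n).trace) :
    a = b := by
  have hp0 : (A.charpoly * B.charpoly).coeff 0 ≠ 0 := by
    rw [Polynomial.mul_coeff_zero]
    exact mul_ne_zero (charpoly_coeff_zero_aux a A hA) (charpoly_coeff_zero_aux b B hB)
  have h1 := trace_aeval_aux a A (A.charpoly * B.charpoly)
  have h2 := trace_aeval_aux b B (A.charpoly * B.charpoly)
  rw [map_mul, Matrix.aeval_self_charpoly, zero_mul, Matrix.trace_zero] at h1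
  rw [map_mul, Matrix.aeval_self_charpoly, mul_zero, Matrix.trace_zero] at h2
  have h3 : ∀ i, (A ^ (i + 1)).trace = (B ^ (i + 1)).trace := fun i => h _ (by omega)
  simp only [h3] at h1
  rw [h1] at h2
  exact_mod_cast mul_left_cancel₀ hp0 (add_left_cancel h2)
end

section
/- Let k be a natural number and for each i with 0 ≤ i ≤ k let A_i be an invertible d_i × d_i complex matrix. If the alternating sum Σ_{i=0}^{k} (−1)^i · trace(A_i^n) equals 0 for every integer n ≥ 1, then the alternating sum Σ_{i=0}^{k} (−1)^i · d_i equals 0. -/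
open Matrix Finset

/-- If invertible complex matrices `A i ∈ GL(d i, ℂ)`, `0 ≤ i ≤ k`, satisfy
`∑ i, (-1)^i * trace ((A i) ^ n) = 0` for every `n ≥ 1`, then `∑ i, (-1)^i * d i = 0`. -/
theorem stmt_7 (k : ℕ) (d : Fin (k + 1) → ℕ)
    (A : ∀ i, Matrix (Fin (d i)) (Fin (d i)) ℂ) (hA : ∀ i, IsUnit (A i))
    (h : ∀ n : ℕ, 1 ≤ n →
      ∑ i : Fin (k + 1), (-1 : ℂ) ^ (i : ℕ) * ((A i) ^ n).trace = 0) :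
    ∑ i : Fin (k + 1), (-1 : ℤ) ^ (i : ℕ) * (d i : ℤ) = 0 := by
  -- a polynomial annihilating every `A i`, with non-zero constant term
  obtain ⟨P, hP0, hPA⟩ : ∃ P : Polynomial ℂ, P.coeff 0 ≠ 0 ∧
      ∀ i, Polynomial.aeval (A i) P = 0 := by
    refine ⟨∏ i, (A i).charpoly, ?_, fun i => ?_⟩
    · rw [Polynomial.coeff_zero_prod, Finset.prod_ne_zero_iff]
      intro i _ h0
      have hd := Matrix.det_eq_sign_charpoly_coeff (A i)
      rw [h0, mul_zero] at hd
      have hu := (Matrix.isUnit_iff_isUnit_det (A i)).1 (hA i)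
      rw [hd] at hu
      exact not_isUnit_zero hu
    · obtain ⟨Q, hQ⟩ := Finset.dvd_prod_of_mem (fun j => (A j).charpoly) (Finset.mem_univ i)
      rw [hQ, map_mul, Matrix.aeval_self_charpoly, zero_mul]
  -- the functional `p ↦ ∑ (-1)^i tr (p (A i))` kills `P` and all `X^n`, `n ≥ 1`
  have key : ∑ i : Fin (k + 1), (-1 : ℂ) ^ (i : ℕ) * (Polynomial.aeval (A i) P).trace
      = P.coeff 0 * ∑ i : Fin (k + 1), (-1 : ℂ) ^ (i : ℕ) * (d i : ℂ) := by
    have h1 : ∀ i : Fin (k + 1), (-1 : ℂ) ^ (i : ℕ) * (Polynomial.aeval (A i) P).trace =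
        ∑ n ∈ range (P.natDegree + 1),
          P.coeff n * ((-1 : ℂ) ^ (i : ℕ) * ((A i) ^ n).trace) := by
      intro i
      rw [Polynomial.aeval_eq_sum_range, Matrix.trace_sum, Finset.mul_sum]
      refine Finset.sum_congr rfl fun n _ => ?_
      rw [Matrix.trace_smul, smul_eq_mul]
      ring
    rw [Finset.sum_congr rfl fun i _ => h1 i, Finset.sum_comm, Finset.sum_range_succ']
    simp only [← Finset.mul_sum]
    rw [Finset.sum_eq_zero fun n _ => by rw [h (n + 1) (by omega), mul_zero]]
    simp
  simp only [hPA, Matrix.trace_zero, mul_zero, Finset.sum_const_zero] at key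
  have := (mul_eq_zero.1 key.symm).resolve_left hP0
  exact_mod_cast this
end

section
/- Let s and t be finite multisets of nonzero complex numbers. If for every integer n ≥ 1 the sum of the n-th powers of the elements of s (with multiplicity) equals the sum of the n-th powers of the elements of t (with multiplicity), then s = t. -/
theorem aux_poly (s t : Multiset ℂ)
    (h : ∀ n : ℕ, 1 ≤ n → (s.map (fun z => z ^ n)).sum = (t.map (fun z => z ^ n)).sum)
    (Q : Polynomial ℂ) :
    (s.map (fun z => z * Q.eval z)).sum = (t.map (fun z => z * Q.eval z)).sum := by
  induction Q using Polynomial.induction_on' with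
  | add p q hp hq =>
    simp only [Polynomial.eval_add, mul_add, Multiset.sum_map_add, hp, hq]
  | monomial n a =>
    have e : ∀ z : ℂ, z * (Polynomial.monomial n a).eval z = a * z ^ (n + 1) := by
      intro z
      rw [Polynomial.eval_monomial]
      ring
    simp only [e, Multiset.sum_map_mul_left, h (n + 1) (by omega)]

theorem aux_count (S : Finset ℂ) (a : ℂ) (Q : Polynomial ℂ)
    (hQ : ∀ z ∈ S, z ≠ a → Q.eval z = 0) (s : Multiset ℂ) (hs : ∀ z ∈ s, z ∈ S) :
    (s.map (fun z => z * Q.eval z)).sum = (s.count a : ℂ) * (a * Q.eval a) := by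
  induction s using Multiset.induction_on with
  | empty => simp
  | cons b s ih =>
    rw [Multiset.map_cons, Multiset.sum_cons,
      ih (fun z hz => hs z (Multiset.mem_cons_of_mem hz))]
    by_cases hb : b = a
    · subst hb
      rw [Multiset.count_cons_self]
      push_cast
      ring
    · rw [Multiset.count_cons_of_ne (Ne.symm hb), hQ b (hs b (Multiset.mem_cons_self b s)) hb]
      ring

/-- Two finite multisets of nonzero complex numbers with equal `n`-th power sums for all
`n ≥ 1` are equal. -/
theorem stmt_8 (s t : Multiset ℂ) (hs : (0 : ℂ) ∉ s) (ht : (0 : ℂ) ∉ t)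
    (h : ∀ n : ℕ, 1 ≤ n → (s.map (fun z => z ^ n)).sum = (t.map (fun z => z ^ n)).sum) :
    s = t := by
  ext a
  by_cases ha : a = 0
  · subst ha
    rw [Multiset.count_eq_zero_of_notMem hs, Multiset.count_eq_zero_of_notMem ht]
  let S := (s + t).toFinset
  let Q : Polynomial ℂ := ∏ w ∈ S.erase a, (Polynomial.X - Polynomial.C w)
  have hQ : ∀ z ∈ S, z ≠ a → Q.eval z = 0 := by
    intro z hz hza
    rw [Polynomial.eval_prod]
    exact Finset.prod_eq_zero (Finset.mem_erase.2 ⟨hza, hz⟩) (by simp)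
  have hQa : Q.eval a ≠ 0 := by
    rw [Polynomial.eval_prod, Finset.prod_ne_zero_iff]
    intro w hw
    simpa [sub_eq_zero] using (Finset.ne_of_mem_erase hw).symm
  have key := aux_poly s t h Q
  rw [aux_count S a Q hQ s (fun z hz => by simp [S, hz]),
    aux_count S a Q hQ t (fun z hz => by simp [S, hz])] at key
  exact_mod_cast mul_right_cancel₀ (mul_ne_zero ha hQa) key
end

section
/- Let n ≥ 3 be an integer. Every normal subgroup of SL(n, ℤ) is either finite or of finite index in SL(n, ℤ). -/
open Matrix
namespace SLZ
variable {n : ℕ}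

/-- The underlying matrix. -/
def M (g : SpecialLinearGroup (Fin n) ℤ) : Matrix (Fin n) (Fin n) ℤ := g.1

lemma M_mul (g h : SpecialLinearGroup (Fin n) ℤ) : M (g * h) = M g * M h := rfl
lemma M_one : M (1 : SpecialLinearGroup (Fin n) ℤ) = 1 := rfl
lemma M_inj {g h : SpecialLinearGroup (Fin n) ℤ} (e : M g = M h) : g = h := Subtype.ext e
lemma M_det (g : SpecialLinearGroup (Fin n) ℤ) : (M g).det = 1 := g.2

/-- The transvection `1 + x wᵀ` (for `w ⬝ x = 0`). -/
noncomputable def T (x w : Fin n → ℤ) : SpecialLinearGroup (Fin n) ℤ :=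
  if h : w ⬝ᵥ x = 0 then ⟨1 + vecMulVec x w, by
    rw [vecMulVec_eq Unit, det_one_add_replicateCol_mul_replicateRow, h, add_zero]⟩ else 1

lemma T_coe {x w : Fin n → ℤ} (h : w ⬝ᵥ x = 0) :
    M (T x w) = 1 + vecMulVec x w := by
  simp [-zsmul_eq_mul, T, h, M]

lemma T_zero_left (w : Fin n → ℤ) : T 0 w = 1 := by
  apply M_inj
  rw [T_coe (by simp), M_one]; simp

lemma T_add_left {x y w : Fin n → ℤ} (hx : w ⬝ᵥ x = 0) (hy : w ⬝ᵥ y = 0) :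
    T (x + y) w = T x w * T y w := by
  apply M_inj
  rw [T_coe (by simp [-zsmul_eq_mul, hx, hy]), M_mul, T_coe hx, T_coe hy]
  simp [-zsmul_eq_mul, mul_add, add_mul, vecMulVec_mul_vecMulVec, hy, add_vecMulVec, add_assoc]

lemma T_add_right {x w z : Fin n → ℤ} (hx : w ⬝ᵥ x = 0) (hy : z ⬝ᵥ x = 0) :
    T x (w + z) = T x w * T x z := by
  apply M_inj
  rw [T_coe (by simp [-zsmul_eq_mul, hx, hy]), M_mul, T_coe hx, T_coe hy]
  simp [-zsmul_eq_mul, mul_add, add_mul, vecMulVec_mul_vecMulVec, hx, vecMulVec_add, add_assoc]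

lemma T_smul_swap (q : ℤ) (x w : Fin n → ℤ) (h : w ⬝ᵥ x = 0) : T x (q • w) = T (q • x) w := by
  apply M_inj
  rw [T_coe (by simp [-zsmul_eq_mul, h]), T_coe (by simp [-zsmul_eq_mul, h])]
  simp [-zsmul_eq_mul, smul_vecMulVec, vecMulVec_smul]

lemma T_neg_left {x w : Fin n → ℤ} (hx : w ⬝ᵥ x = 0) : T (-x) w = (T x w)⁻¹ := by
  rw [eq_inv_iff_mul_eq_one, ← T_add_left (by simp [-zsmul_eq_mul, hx]) hx]; simp [-zsmul_eq_mul, T_zero_left]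

lemma T_neg_right {x w : Fin n → ℤ} (hx : w ⬝ᵥ x = 0) : T x (-w) = (T x w)⁻¹ := by
  rw [← T_neg_left hx, ← neg_one_smul ℤ w, ← neg_one_smul ℤ x, T_smul_swap _ _ _ hx]

lemma T_zpow {x w : Fin n → ℤ} (hx : w ⬝ᵥ x = 0) (q : ℤ) : (T x w) ^ q = T (q • x) w := by
  induction q using Int.induction_on with
  | zero => simp [-zsmul_eq_mul, T_zero_left]
  | succ i ih => rw [_root_.zpow_add_one, ih, add_smul, T_add_left (by rw [dotProduct_smul, hx, smul_zero]) (by simp [-zsmul_eq_mul, hx]), one_smul]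
  | pred i ih => rw [_root_.zpow_sub_one, ih, sub_smul, sub_eq_add_neg, T_add_left (by rw [dotProduct_smul, hx, smul_zero]) (by simp [hx]), one_smul, T_neg_left hx]

lemma mul_inv_coe (g : SpecialLinearGroup (Fin n) ℤ) : M g * M g⁻¹ = 1 := by
  rw [← M_mul, mul_inv_cancel, M_one]

lemma inv_mul_coe (g : SpecialLinearGroup (Fin n) ℤ) : M g⁻¹ * M g = 1 := by
  rw [← M_mul, inv_mul_cancel, M_one]

lemma conj_dot (g : SpecialLinearGroup (Fin n) ℤ) (x w : Fin n → ℤ) :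
    (w ᵥ* (M g⁻¹)) ⬝ᵥ ((M g) *ᵥ x) = w ⬝ᵥ x := by
  rw [dotProduct_mulVec, vecMul_vecMul, inv_mul_coe, vecMul_one]

lemma T_conj (g : SpecialLinearGroup (Fin n) ℤ) {x w : Fin n → ℤ} (hx : w ⬝ᵥ x = 0) :
    g * T x w * g⁻¹ = T ((M g) *ᵥ x) (w ᵥ* (M g⁻¹)) := by
  apply M_inj
  rw [T_coe (by rw [conj_dot, hx]), M_mul, M_mul, T_coe hx,
    mul_add, add_mul, mul_one, mul_inv_coe, mul_vecMulVec, vecMulVec_mul]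

lemma T_mulVec {y b : Fin n → ℤ} (h : b ⬝ᵥ y = 0) (x : Fin n → ℤ) :
    M (T y b) *ᵥ x = x + (b ⬝ᵥ x) • y := by
  rw [T_coe h, add_mulVec, one_mulVec, vecMulVec_mulVec]; simp

lemma vecMul_T_inv {y b : Fin n → ℤ} (h : b ⬝ᵥ y = 0) (x : Fin n → ℤ) :
    x ᵥ* M (T y b)⁻¹ = x - (x ⬝ᵥ y) • b := by
  rw [← T_neg_left h, T_coe (by simp [-zsmul_eq_mul, h]), vecMul_add, vecMul_one, vecMul_vecMulVec]; simp [-zsmul_eq_mul, sub_eq_add_neg]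

/-- Conjugating a transvection by a transvection. -/
lemma T_conj_T {y b x d : Fin n → ℤ} (h : b ⬝ᵥ y = 0) (hx : d ⬝ᵥ x = 0) :
    T y b * T x d * (T y b)⁻¹ = T (x + (b ⬝ᵥ x) • y) (d - (d ⬝ᵥ y) • b) := by
  rw [T_conj _ hx, T_mulVec h, vecMul_T_inv h]

lemma step_R {N : Subgroup (SpecialLinearGroup (Fin n) ℤ)} (hN : N.Normal) {y b x d : Fin n → ℤ}
    (h : b ⬝ᵥ y = 0) (hx : d ⬝ᵥ x = 0) (hy : d ⬝ᵥ y = 0) (hT : T y b ∈ N) :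
    T ((b ⬝ᵥ x) • y) d ∈ N := by
  have h1 : T y b * (T x d * (T y b)⁻¹ * (T x d)⁻¹) ∈ N :=
    N.mul_mem hT (hN.conj_mem _ (N.inv_mem hT) _)
  have h2 := T_conj_T (d := d) h hx
  rw [hy, zero_smul, sub_zero, add_comm, T_add_left (by simp [-zsmul_eq_mul, hy]) hx] at h2
  have : T ((b ⬝ᵥ x) • y) d = T y b * (T x d * (T y b)⁻¹ * (T x d)⁻¹) := by
    rw [← mul_inv_eq_iff_eq_mul.mpr h2]; group
  rwa [this]

lemma step_L {N : Subgroup (SpecialLinearGroup (Fin n) ℤ)} (hN : N.Normal) {y d x c : Fin n → ℤ}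
    (h : d ⬝ᵥ y = 0) (hx : d ⬝ᵥ x = 0) (hc : c ⬝ᵥ x = 0) (hT : T y d ∈ N) :
    T ((c ⬝ᵥ y) • x) d ∈ N := by
  have h1 : T y d * (T x c * (T y d)⁻¹ * (T x c)⁻¹) ∈ N :=
    N.mul_mem hT (hN.conj_mem _ (N.inv_mem hT) _)
  have h2 := T_conj_T (d := c) h hc
  rw [hx, zero_smul, add_zero, sub_eq_add_neg, add_comm, T_add_right (by simp [-zsmul_eq_mul, hx]) hc,
    T_neg_right (by simp [-zsmul_eq_mul, hx]), T_smul_swap _ _ _ hx] at h2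
  have : (T ((c ⬝ᵥ y) • x) d)⁻¹ = T y d * (T x c * (T y d)⁻¹ * (T x c)⁻¹) := by
    rw [← mul_inv_eq_iff_eq_mul.mpr h2]; group
  rw [← N.inv_mem_iff, this]; exact h1

lemma parallel_or {b d : Fin n → ℤ} (hb : b ≠ 0) (hd : d ≠ 0) :
    (∃ x, d ⬝ᵥ x = 0 ∧ b ⬝ᵥ x ≠ 0) ∨ ∃ s t : ℤ, s ≠ 0 ∧ t ≠ 0 ∧ s • b = t • d := by
  by_cases h : ∃ k l, b k * d l - b l * d k ≠ 0
  · obtain ⟨k, l, h⟩ := h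
    left
    refine ⟨d l • Pi.single k 1 - d k • Pi.single l 1, ?_, ?_⟩
    · simp [-zsmul_eq_mul]; ring
    · simp [-zsmul_eq_mul]
      intro h'
      apply h; linarith
  · push Not at h
    right
    obtain ⟨l, hl⟩ := Function.ne_iff.mp hd
    have key : d l • b = b l • d := by
      ext k; have := h k l; simp; linarith
    refine ⟨d l, b l, hl, ?_, key⟩
    intro h0
    rw [h0, zero_smul] at key
    exact hb ((smul_eq_zero.mp key).resolve_left hl)

/-- Up to a nonzero multiple, the transvection along `(y,d)` is in `N`. -/
def P (N : Subgroup (SpecialLinearGroup (Fin n) ℤ)) (y d : Fin n → ℤ) : Prop :=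
  ∃ q : ℤ, q ≠ 0 ∧ T (q • y) d ∈ N

lemma P_R {N : Subgroup (SpecialLinearGroup (Fin n) ℤ)} (hN : N.Normal) {y b d : Fin n → ℤ}
    (hb : b ≠ 0) (hd : d ≠ 0) (hby : b ⬝ᵥ y = 0) (hdy : d ⬝ᵥ y = 0) (h : P N y b) : P N y d := by
  obtain ⟨q, hq, hT⟩ := h
  rcases parallel_or hb hd with ⟨x, hx, hbx⟩ | ⟨s, t, hs, ht, hst⟩
  · refine ⟨(b ⬝ᵥ x) * q, mul_ne_zero hbx hq, ?_⟩
    rw [mul_smul]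
    exact step_R hN (by simp [-zsmul_eq_mul, hby]) hx (by simp [-zsmul_eq_mul, hdy]) hT
  · refine ⟨t * q, mul_ne_zero ht hq, ?_⟩
    rw [mul_smul, ← T_smul_swap _ _ _ (by simp [-zsmul_eq_mul, hdy]), ← hst, T_smul_swap _ _ _ (by simp [-zsmul_eq_mul, hby]),
      ← T_zpow (by simp [-zsmul_eq_mul, hby])]
    exact N.zpow_mem hT _

lemma P_L {N : Subgroup (SpecialLinearGroup (Fin n) ℤ)} (hN : N.Normal) {y x d : Fin n → ℤ}
    (hy : y ≠ 0) (hx : x ≠ 0) (hdy : d ⬝ᵥ y = 0) (hdx : d ⬝ᵥ x = 0) (h : P N y d) : P N x d := by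
  obtain ⟨q, hq, hT⟩ := h
  rcases parallel_or hy hx with ⟨c, hc, hbx⟩ | ⟨s, t, hs, ht, hst⟩
  · refine ⟨q * (c ⬝ᵥ y), mul_ne_zero hq (by rwa [dotProduct_comm]), ?_⟩
    have := step_L hN (by simp [-zsmul_eq_mul, hdy]) hdx (by rwa [dotProduct_comm]) hT (c := c)
    simpa [-zsmul_eq_mul] using this
  · refine ⟨q * t, mul_ne_zero hq ht, ?_⟩
    rw [mul_smul, ← hst, smul_comm, ← T_zpow (by simp [-zsmul_eq_mul, hdy])]
    exact N.zpow_mem hT _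

lemma exists_orth (hn : 3 ≤ n) (a b : Fin n → ℤ) : ∃ d : Fin n → ℤ, d ≠ 0 ∧ d ⬝ᵥ a = 0 ∧ d ⬝ᵥ b = 0 := by
  obtain ⟨t, ht0, ht, -⟩ := Int.Matrix.exists_ne_zero_int_vec_norm_le (α := Fin 2) (β := Fin n)
    (Matrix.of ![a, b]) (by simp; omega) (by simp)
  refine ⟨t, ht0, ?_, ?_⟩
  · have := congrFun ht 0
    rw [dotProduct_comm]; simpa [mulVec] using this
  · have := congrFun ht 1
    rw [dotProduct_comm]; simpa [mulVec] using this

lemma exists_T_mem (hn : 3 ≤ n) {N : Subgroup (SpecialLinearGroup (Fin n) ℤ)} (hN : N.Normal)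
    {h : SpecialLinearGroup (Fin n) ℤ} (hh : h ∈ N) {a : Fin n → ℤ}
    (ha : ∀ s t : ℤ, t ≠ 0 → s • ((M h) *ᵥ a) ≠ t • a) :
    ∃ y b : Fin n → ℤ, y ≠ 0 ∧ b ≠ 0 ∧ b ⬝ᵥ y = 0 ∧ T y b ∈ N := by
  obtain ⟨b, hb0, hba, hbha⟩ := exists_orth hn a ((M h) *ᵥ a)
  -- the first commutator
  set g := h * T a b * h⁻¹ * (T a b)⁻¹ with hg
  have hgN : g ∈ N := by
    have : g = h * (T a b * h⁻¹ * (T a b)⁻¹) := by rw [hg]; group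
    rw [this]
    exact N.mul_mem hh (hN.conj_mem _ (N.inv_mem hh) _)
  have hg1 : g ≠ 1 := by
    intro h1
    rw [hg, mul_inv_eq_one, T_conj _ hba] at h1
    have h2 := congrArg M h1
    rw [T_coe (by rw [conj_dot, hba]), T_coe hba] at h2
    have h2 := add_left_cancel h2
    obtain ⟨j, hj⟩ := Function.ne_iff.mp hb0
    apply ha ((b ᵥ* (M h⁻¹)) j) (b j) hj
    ext i
    have := congrFun (congrFun h2 i) j
    simp only [vecMulVec_apply] at this
    simp only [Pi.smul_apply, smul_eq_mul]
    linarith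
  have hbg : b ᵥ* (M g⁻¹) = b := by
    have : g⁻¹ = T a b * (h * T (-a) b * h⁻¹) := by rw [hg, T_neg_left hba]; group
    rw [this, T_conj _ (by simp [-zsmul_eq_mul, hba]), M_mul, T_coe hba,
      T_coe (by rw [conj_dot]; simp [-zsmul_eq_mul, hba]), ← vecMul_vecMul]
    simp [-zsmul_eq_mul, vecMul_add, vecMul_vecMulVec, hba, hbha, mulVec_neg, neg_vecMulVec, vecMul_neg]
  have hbg' : b ᵥ* (M g) = b := by
    conv_lhs => rw [← hbg]
    rw [vecMul_vecMul, inv_mul_coe, vecMul_one]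
  by_cases hx : ∃ x, b ⬝ᵥ x = 0 ∧ (M g) *ᵥ x ≠ x
  · obtain ⟨x, hbx, hgx⟩ := hx
    have hbgx : b ⬝ᵥ ((M g) *ᵥ x) = 0 := by rw [dotProduct_mulVec, hbg', hbx]
    refine ⟨(M g) *ᵥ x - x, b, sub_ne_zero.mpr hgx, hb0, by rw [dotProduct_sub, hbgx, hbx, sub_zero], ?_⟩
    rw [sub_eq_add_neg, T_add_left hbgx (by simp [-zsmul_eq_mul, hbx]), T_neg_left hbx]
    have h3 := T_conj g hbx
    rw [hbg] at h3
    rw [← h3]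
    have : g * T x b * g⁻¹ * (T x b)⁻¹ = g * (T x b * g⁻¹ * (T x b)⁻¹) := by group
    rw [this]
    exact N.mul_mem hgN (hN.conj_mem _ (N.inv_mem hgN) _)
  · push Not at hx
    obtain ⟨j, hj⟩ := Function.ne_iff.mp hb0
    have hj : b j ≠ 0 := hj
    set y := (M g) *ᵥ Pi.single j 1 - Pi.single j 1 with hy
    have hby : b ⬝ᵥ y = 0 := by
      rw [hy, dotProduct_sub, dotProduct_mulVec, hbg', sub_self]
    -- (g-1) * b_j = y bᵀ
    have key : (b j) • ((M g) - 1) = vecMulVec y b := by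
      ext i k
      have := congrFun (hx (b j • Pi.single k 1 - b k • Pi.single j 1) (by simp [-zsmul_eq_mul]; ring)) i
      simp only [mulVec_sub, mulVec_smul, mulVec_single_one, Pi.sub_apply, Pi.smul_apply, smul_eq_mul, col_apply] at this
      simp only [hy, vecMulVec_apply, mulVec_single_one, Pi.sub_apply, Matrix.smul_apply, Matrix.sub_apply, smul_eq_mul, col_apply, one_apply]
      simp only [Pi.single_apply] at this ⊢
      linarith
    have hy0 : y ≠ 0 := by
      intro h0
      rw [h0, zero_vecMulVec] at key
      apply hg1
      apply M_inj
      have := (smul_eq_zero.mp key).resolve_left hj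
      rw [M_one]; exact sub_eq_zero.mp this
    refine ⟨y, b, hy0, hb0, hby, ?_⟩
    have hsq : ((M g) - 1) * ((M g) - 1) = 0 := by
      have h5 : ((b j) • ((M g) - 1)) * ((b j) • ((M g) - 1)) = 0 := by
        rw [key, vecMulVec_mul_vecMulVec, hby]; simp
      rw [smul_mul_smul_comm] at h5
      exact (smul_eq_zero.mp h5).resolve_left (mul_ne_zero hj hj)
    have hpow : ∀ m : ℕ, M (g ^ m) = 1 + m • ((M g) - 1) := by
      intro m
      induction m with
      | zero => simp [M_one]
      | succ m ih =>
        rw [pow_succ, M_mul, ih]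
        have : (M g) = 1 + ((M g) - 1) := by abel
        conv_lhs => rw [this]
        rw [add_sub_cancel_left, mul_add, mul_one, add_mul, one_mul, smul_mul_assoc, hsq, smul_zero, add_smul, one_smul]; abel
    have hpm : g ^ (b j).natAbs = T y b ∨ g ^ (b j).natAbs = (T y b)⁻¹ := by
      rcases Int.natAbs_eq (b j) with e | e
      · left
        apply M_inj
        rw [hpow, T_coe hby, ← key]
        rw [e]; simp
      · right
        rw [← T_neg_left hby]
        apply M_inj
        rw [hpow, T_coe (by simp [-zsmul_eq_mul, hby]), neg_vecMulVec, ← key]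
        rw [e]; simp
    rcases hpm with e | e
    · rw [← e]; exact N.pow_mem hgN _
    · rw [← N.inv_mem_iff, ← e]; exact N.pow_mem hgN _

lemma finite_of_scalar (hn : 3 ≤ n) (N : Subgroup (SpecialLinearGroup (Fin n) ℤ))
    (H : ∀ h ∈ N, ∀ a : Fin n → ℤ, ∃ s t : ℤ, t ≠ 0 ∧ s • ((M h) *ᵥ a) = t • a) :
    (N : Set (SpecialLinearGroup (Fin n) ℤ)).Finite := by
  let i0 : Fin n := ⟨0, by omega⟩
  have hs : ∀ h ∈ N, (M h) = Matrix.diagonal (fun _ => M h i0 i0) := by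
    intro h hh
    have hoff : ∀ i j, i ≠ j → M h i j = 0 := by
      intro i j hij
      obtain ⟨s, t, ht, e⟩ := H h hh (Pi.single j 1)
      have e1 := congrFun e i
      have e2 := congrFun e j
      simp [-zsmul_eq_mul, hij] at e1 e2
      rcases e1 with rfl | e1
      · simp at e2; exact absurd e2.symm ht
      · exact e1
    have hd : ∀ i, M h i i = M h i0 i0 := by
      intro i
      by_cases hi : i = i0
      · rw [hi]
      obtain ⟨s, t, ht, e⟩ := H h hh (Pi.single i 1 + Pi.single i0 1)
      have e1 := congrFun e i
      have e2 := congrFun e i0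
      have hi' : i0 ≠ i := fun h => hi h.symm
      simp [-zsmul_eq_mul, mulVec_add, hi, hi', hoff i i0 hi, hoff i0 i hi'] at e1 e2
      have hs0 : s ≠ 0 := by rintro rfl; simp at e1; exact ht e1.symm
      exact mul_left_cancel₀ hs0 (e1.trans e2.symm)
    ext i j
    rw [diagonal_apply]
    split_ifs with hij
    · rw [← hij, hd]
    · exact hoff i j hij
  have hu : ∀ h ∈ N, M h i0 i0 ∈ ({1, -1} : Set ℤ) := by
    intro h hh
    have h1 := M_det h
    rw [hs h hh, det_diagonal] at h1
    simp only [Finset.prod_const, Finset.card_univ, Fintype.card_fin] at h1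
    have : IsUnit (M h i0 i0) := by
      refine IsUnit.of_pow_eq_one h1 (by omega)
    simpa using Int.isUnit_iff.mp this
  refine Set.Finite.of_finite_image (f := fun h => M h i0 i0) ?_ ?_
  · apply Set.Finite.subset (Set.toFinite ({1, -1} : Set ℤ))
    rintro _ ⟨h, hh, rfl⟩
    exact hu h hh
  · intro g hg h hh e
    apply M_inj
    rw [hs g hg, hs h hh]
    simp only at e
    rw [e]

lemma finite_or_P (hn : 3 ≤ n) (N : Subgroup (SpecialLinearGroup (Fin n) ℤ)) (hN : N.Normal) :
    (N : Set (SpecialLinearGroup (Fin n) ℤ)).Finite ∨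
      ∀ i j : Fin n, i ≠ j → P N (Pi.single i 1) (Pi.single j 1) := by
  by_cases H : ∀ h ∈ N, ∀ a : Fin n → ℤ, ∃ s t : ℤ, t ≠ 0 ∧ s • ((M h) *ᵥ a) = t • a
  · exact Or.inl (finite_of_scalar hn N H)
  · right
    push Not at H
    obtain ⟨h, hh, a, ha⟩ := H
    obtain ⟨y, b, hy, hb, hby, hT⟩ := exists_T_mem hn hN hh ha
    intro i j hij
    have hP : P N y b := ⟨1, one_ne_zero, by rwa [one_smul]⟩
    obtain ⟨d, hd, hdy, hdi⟩ := exists_orth hn y (Pi.single i 1)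
    have h1 := P_R hN hb hd hby hdy hP
    have hi0 : (Pi.single i 1 : Fin n → ℤ) ≠ 0 := by simp
    have hj0 : (Pi.single j 1 : Fin n → ℤ) ≠ 0 := by simp
    have h2 := P_L hN hy hi0 hdy hdi h1
    exact P_R hN hd hj0 hdi (by simp [-zsmul_eq_mul, hij]) h2

section Finiteness
variable {G : Type*} [Group G] (φ : SpecialLinearGroup (Fin n) ℤ →* G)

/-- Standard basis vector. -/
abbrev e (i : Fin n) : Fin n → ℤ := Pi.single i 1

lemma e_dot (i : Fin n) (v : Fin n → ℤ) : e i ⬝ᵥ v = v i := by simp [e]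

lemma dot_e (i : Fin n) (v : Fin n → ℤ) : v ⬝ᵥ e i = v i := by simp [e]

lemma e_dot_smul_ne {i j : Fin n} (h : i ≠ j) (t : ℤ) : e j ⬝ᵥ (t • e i) = 0 := by
  rw [dotProduct_smul, e_dot]; simp [e, h.symm]

lemma e_dot_ne {i j : Fin n} (h : i ≠ j) : e j ⬝ᵥ (e i) = 0 := by
  rw [e_dot]; simp [e, h.symm]

lemma sum_smul_e (v : Fin n → ℤ) : ∑ i, v i • e i = v := by
  ext k
  simp [e, Finset.sum_apply, Pi.single_apply]

lemma sum_erase_smul_e (v : Fin n → ℤ) (m : Fin n) (hv : v m = 0) :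
    ∑ i ∈ Finset.univ.erase m, v i • e i = v := by
  conv_rhs => rw [← sum_smul_e v]
  rw [← Finset.add_sum_erase _ _ (Finset.mem_univ m), hv, zero_smul, zero_add]

lemma dot_sum_zero {ι : Type*} (s : Finset ι) (x : ι → Fin n → ℤ) (w : Fin n → ℤ)
    (h : ∀ p ∈ s, w ⬝ᵥ x p = 0) : w ⬝ᵥ (∑ p ∈ s, x p) = 0 := by
  rw [dotProduct_sum]; exact Finset.sum_eq_zero h

lemma fin_sum {ι : Type*} (s : Finset ι) (Q : ι → (Fin n → ℤ) → (Fin n → ℤ) → Prop)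
    (hQ : ∀ p x w, Q p x w → w ⬝ᵥ x = 0)
    (hfin : ∀ p ∈ s, {g : G | ∃ x w, Q p x w ∧ φ (T x w) = g}.Finite) :
    {g : G | ∃ (x : ι → Fin n → ℤ) (w : Fin n → ℤ), (∀ p ∈ s, Q p (x p) w) ∧
      φ (T (∑ p ∈ s, x p) w) = g}.Finite := by
  classical
  induction s using Finset.induction_on with
  | empty =>
    refine (Set.finite_singleton (1 : G)).subset ?_
    rintro _ ⟨x, w, -, rfl⟩
    simp [T_zero_left]
  | insert a s ha ih =>
    refine ((hfin a (Finset.mem_insert_self a s)).mul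
      (ih fun p hp => hfin p (Finset.mem_insert_of_mem hp))).subset ?_
    rintro _ ⟨x, w, h, rfl⟩
    refine ⟨φ (T (x a) w), ⟨x a, w, h a (Finset.mem_insert_self a s), rfl⟩,
      φ (T (∑ p ∈ s, x p) w), ⟨x, w, fun p hp => h p (Finset.mem_insert_of_mem hp), rfl⟩, ?_⟩
    simp only
    rw [← map_mul, ← T_add_left (hQ _ _ _ (h a (Finset.mem_insert_self a s)))
      (dot_sum_zero _ _ _ fun p hp => hQ _ _ _ (h p (Finset.mem_insert_of_mem hp))),
      Finset.sum_insert ha]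

lemma fin_elem (hφ : ∀ i j : Fin n, i ≠ j → IsOfFinOrder (φ (T (e i) (e j)))) {i j : Fin n}
    (hij : i ≠ j) : {g : G | ∃ t : ℤ, φ (T (t • e i) (e j)) = g}.Finite := by
  have := (hφ i j hij).finite_zpowers
  refine this.subset ?_
  rintro _ ⟨t, rfl⟩
  rw [← T_zpow (e_dot_ne hij), map_zpow]
  exact ⟨t, rfl⟩

lemma fin_col (hφ : ∀ i j : Fin n, i ≠ j → IsOfFinOrder (φ (T (e i) (e j)))) (m : Fin n) :
    {g : G | ∃ x : Fin n → ℤ, x m = 0 ∧ φ (T x (e m)) = g}.Finite := by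
  refine (fin_sum φ (Finset.univ.erase m)
    (fun i x w => i ≠ m ∧ w = e m ∧ ∃ t : ℤ, x = t • e i) ?_ ?_).subset ?_
  · rintro i x w ⟨hi, rfl, t, rfl⟩
    exact e_dot_smul_ne hi t
  · intro i hi
    have hi := (Finset.mem_erase.mp hi).1
    refine (fin_elem φ hφ hi).subset ?_
    rintro _ ⟨x, w, ⟨-, rfl, t, rfl⟩, rfl⟩
    exact ⟨t, rfl⟩
  · rintro _ ⟨x, hx, rfl⟩
    refine ⟨fun i => x i • e i, e m, fun i hi => ⟨(Finset.mem_erase.mp hi).1, rfl, x i, rfl⟩, ?_⟩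
    rw [sum_erase_smul_e x m hx]

lemma fin_row (hφ : ∀ i j : Fin n, i ≠ j → IsOfFinOrder (φ (T (e i) (e j)))) (m : Fin n) :
    {g : G | ∃ w : Fin n → ℤ, w m = 0 ∧ φ (T (e m) w) = g}.Finite := by
  classical
  have key : ∀ s : Finset (Fin n), m ∉ s →
      {g : G | ∃ w : Fin n → ℤ, φ (T (e m) (∑ i ∈ s, w i • e i)) = g}.Finite := by
    intro s
    induction s using Finset.induction_on with
    | empty =>
      intro _
      refine (Set.finite_singleton (1 : G)).subset ?_
      rintro _ ⟨w, rfl⟩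
      have : T (e m) (0 : Fin n → ℤ) = 1 := by
        have := T_smul_swap 0 (e m) (0 : Fin n → ℤ) (by simp)
        simpa [T_zero_left] using this
      simp [this]
    | insert a s ha ih =>
      intro hm
      rw [Finset.mem_insert, not_or] at hm
      refine ((fin_elem φ hφ hm.1).mul (ih hm.2)).subset ?_
      rintro _ ⟨w, rfl⟩
      refine ⟨φ (T (w a • e m) (e a)), ⟨w a, rfl⟩, φ (T (e m) (∑ i ∈ s, w i • e i)), ⟨w, rfl⟩, ?_⟩
      simp only
      rw [← T_smul_swap _ _ _ (e_dot_ne hm.1), ← map_mul, ← T_add_right, Finset.sum_insert ha]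
      · rw [dotProduct_comm]; exact e_dot_smul_ne (fun h => hm.1 h.symm) _
      · rw [dotProduct_comm]
        refine dot_sum_zero _ _ _ fun p hp => e_dot_smul_ne ?_ _
        rintro rfl; exact hm.2 hp
  refine (key (Finset.univ.erase m) (by simp)).subset ?_
  rintro _ ⟨w, hw, rfl⟩
  exact ⟨w, by rw [sum_erase_smul_e w m hw]⟩

lemma fin_zero_coord (hφ : ∀ i j : Fin n, i ≠ j → IsOfFinOrder (φ (T (e i) (e j)))) (m : Fin n) :
    {g : G | ∃ x w : Fin n → ℤ, (w ⬝ᵥ x = 0 ∧ x m = 0) ∧ φ (T x w) = g}.Finite := by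
  have hc := fin_col φ hφ m
  have hr := fin_row φ hφ m
  refine ((((hr.inv.mul hc).mul hr).mul hc.inv).mul hc).subset ?_
  rintro _ ⟨x, w, ⟨hwx, hx⟩, rfl⟩
  set w' := w - w m • e m with hw'
  have hw'm : w' m = 0 := by simp [hw', e]
  have hw'x : w' ⬝ᵥ x = 0 := by
    rw [hw', sub_dotProduct, hwx, smul_dotProduct, e_dot, hx]; simp
  have hmx : e m ⬝ᵥ x = 0 := by rw [e_dot, hx]
  have hw'e : w' ⬝ᵥ e m = 0 := by rw [dot_e, hw'm]
  have h1 := T_conj_T (y := x) (b := e m) (x := e m) (d := w') hmx hw'e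
  have h11 : e m ⬝ᵥ e m = 1 := by rw [e_dot]; simp [e]
  rw [h11, one_smul, hw'x, zero_smul, sub_zero, T_add_left hw'e hw'x] at h1
  have h2 : T x w = (T (e m) w')⁻¹ * T x (e m) * T (e m) w' * (T x (e m))⁻¹ * T (w m • x) (e m) := by
    rw [← T_smul_swap _ _ _ hmx]
    have : w = w' + w m • e m := by rw [hw']; abel
    conv_lhs => rw [this]
    rw [T_add_right hw'x (by rw [smul_dotProduct, hmx, smul_zero]), eq_inv_mul_of_mul_eq h1.symm]
    simp only [mul_assoc]
  rw [h2]
  simp only [map_mul, map_inv]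
  refine Set.mul_mem_mul (Set.mul_mem_mul (Set.mul_mem_mul (Set.mul_mem_mul ?_ ?_) ?_) ?_) ?_
  · exact Set.inv_mem_inv.mpr ⟨w', hw'm, rfl⟩
  · exact ⟨x, hx, rfl⟩
  · exact ⟨w', hw'm, rfl⟩
  · exact Set.inv_mem_inv.mpr ⟨x, hx, rfl⟩
  · exact ⟨w m • x, by simp [hx], rfl⟩

lemma exists_third (hn : 3 ≤ n) (k l : Fin n) : ∃ m : Fin n, m ≠ k ∧ m ≠ l := by
  by_contra! h
  have : (Finset.univ : Finset (Fin n)) ⊆ {k, l} := by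
    intro m _
    by_cases hm : m = k
    · simp [hm]
    · simp [h m hm]
  have := (Finset.card_le_card this).trans (Finset.card_le_two)
  simp at this; omega

lemma fin_unimod (hn : 3 ≤ n) (hφ : ∀ i j : Fin n, i ≠ j → IsOfFinOrder (φ (T (e i) (e j)))) :
    {g : G | ∃ v w : Fin n → ℤ, w ⬝ᵥ v = 0 ∧ (∃ u, u ⬝ᵥ w = 1) ∧ φ (T v w) = g}.Finite := by
  choose f hf using exists_third hn
  refine (fin_sum φ (Finset.univ : Finset (Fin n × Fin n))
    (fun p x w => w ⬝ᵥ x = 0 ∧ x (f p.1 p.2) = 0) (fun p x w h => h.1)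
    (fun p _ => fin_zero_coord φ hφ _)).subset ?_
  rintro _ ⟨v, w, hwv, ⟨u, hu⟩, rfl⟩
  refine ⟨fun p => (v p.2 * u p.1) • (w p.1 • e p.2 - w p.2 • e p.1), w, ?_, ?_⟩
  · rintro ⟨k, l⟩ -
    constructor
    · simp only [dotProduct_smul, dotProduct_sub, dot_e, smul_eq_mul]; ring
    · simp [e, (hf k l).1, (hf k l).2]
  · congr 2
    rw [Fintype.sum_prod_type]
    ext i
    simp only [dotProduct] at hu hwv
    simp only [Finset.sum_apply, Pi.smul_apply, Pi.sub_apply, smul_eq_mul, e, Pi.single_apply,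
      mul_sub, mul_ite, mul_one, mul_zero, Finset.sum_sub_distrib, Finset.sum_ite_eq,
      Finset.mem_univ, if_true]
    have h1 : ∑ k, v i * u k * w k = v i := by
      simp only [mul_assoc]; rw [← Finset.mul_sum, hu, mul_one]
    rw [h1, Finset.sum_comm]
    simp only [Finset.sum_ite_eq, Finset.mem_univ, if_true]
    have h2 : ∑ l, v l * u i * w l = 0 := by
      calc ∑ l, v l * u i * w l = u i * ∑ l, w l * v l := by
            rw [Finset.mul_sum]; exact Finset.sum_congr rfl fun l _ => by ring
        _ = 0 := by rw [hwv, mul_zero]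
    rw [h2, sub_zero]

lemma fin_conj (hn : 3 ≤ n) (hφ : ∀ i j : Fin n, i ≠ j → IsOfFinOrder (φ (T (e i) (e j)))) 
    {i j : Fin n} (hij : i ≠ j) :
    {h : G | ∃ g, φ (g * T (e i) (e j) * g⁻¹) = h}.Finite := by
  refine (fin_unimod φ hn hφ).subset ?_
  rintro _ ⟨g, rfl⟩
  refine ⟨M g *ᵥ e i, e j ᵥ* M g⁻¹, by rw [conj_dot, e_dot_ne hij], ⟨M g *ᵥ e j, ?_⟩, ?_⟩
  · rw [dotProduct_comm, conj_dot, e_dot]; simp [e]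
  · rw [T_conj _ (e_dot_ne hij)]

end Finiteness

lemma finite_of_conj {G : Type*} [Group G] {ι : Type*} [Finite ι] (s : ι → G)
    (hgen : Subgroup.closure (Set.range s) = ⊤) (hperf : ∀ i, s i ∈ commutator G)
    (hconj : ∀ i, {h : G | ∃ g, g * s i * g⁻¹ = h}.Finite) : Finite G := by
  let f : G → ι → G := fun g i => g * s i * g⁻¹
  have hfin : (Set.range f).Finite := by
    refine (Set.Finite.pi' hconj).subset ?_
    rintro _ ⟨g, rfl⟩ i
    exact ⟨g, rfl⟩
  have hcen : ∀ g h, f g = f h → ∀ x, g * x * g⁻¹ = h * x * h⁻¹ := by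
    intro g h hgh x
    have hx : x ∈ Subgroup.closure (Set.range s) := by rw [hgen]; trivial
    have : Subgroup.closure (Set.range s) ≤
        MonoidHom.eqLocus (MulAut.conj g).toMonoidHom (MulAut.conj h).toMonoidHom := by
      rw [Subgroup.closure_le]
      rintro _ ⟨i, rfl⟩
      exact congrFun hgh i
    exact this hx
  have : Finite (Set.range f) := hfin
  choose r hr using fun y : Set.range f => y.2
  have hcs : (commutatorSet G).Finite := by
    refine (Set.finite_range (fun p : Set.range f × Set.range f => r p.1 * r p.2 * (r p.1)⁻¹ * (r p.2)⁻¹)).subset ?_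
    rintro _ ⟨g, h, rfl⟩
    refine ⟨⟨⟨f g, g, rfl⟩, ⟨f h, h, rfl⟩⟩, ?_⟩
    simp only
    set a := r ⟨f g, g, rfl⟩
    set b := r ⟨f h, h, rfl⟩
    have ha : f a = f g := hr ⟨f g, g, rfl⟩
    have hb : f b = f h := hr ⟨f h, h, rfl⟩
    have h1 := hcen _ _ ha b
    have h2 := hcen _ _ hb g⁻¹
    rw [commutatorElement_def, h1, mul_assoc, mul_assoc, ← mul_assoc b, h2]
    group
  have : Finite (commutatorSet G) := hcs
  have htop : commutator G = ⊤ := by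
    rw [eq_top_iff, ← hgen, Subgroup.closure_le]
    rintro _ ⟨i, rfl⟩
    exact hperf i
  have hf : Finite (commutator G) := inferInstance
  rw [htop] at hf
  exact Finite.of_equiv _ Subgroup.topEquiv.toEquiv


section Generation

/-- The subgroup generated by elementary matrices. -/
def H (n : ℕ) : Subgroup (SpecialLinearGroup (Fin n) ℤ) :=
  Subgroup.closure (Set.range fun p : {p : Fin n × Fin n // p.1 ≠ p.2} => T (e p.1.1) (e p.1.2))

lemma elem_mem {i j : Fin n} (hij : i ≠ j) (t : ℤ) : T (t • e i) (e j) ∈ H n := by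
  rw [← T_zpow (e_dot_ne hij)]
  have h1 : T (e i) (e j) ∈ H n := Subgroup.subset_closure ⟨⟨(i, j), hij⟩, rfl⟩
  exact Subgroup.zpow_mem _ h1 _

lemma col_mem (x : Fin n → ℤ) (m : Fin n) (hx : x m = 0) : T x (e m) ∈ H n := by
  classical
  have key : ∀ s : Finset (Fin n), m ∉ s → T (∑ i ∈ s, x i • e i) (e m) ∈ H n := by
    intro s
    induction s using Finset.induction_on with
    | empty => intro _; simp [T_zero_left]
    | insert a s ha ih =>
      intro hm
      rw [Finset.mem_insert, not_or] at hm
      rw [Finset.sum_insert ha, T_add_left (e_dot_smul_ne (Ne.symm hm.1) _)]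
      · exact Subgroup.mul_mem _ (elem_mem (Ne.symm hm.1) _) (ih hm.2)
      · refine dot_sum_zero _ _ _ fun p hp => e_dot_smul_ne ?_ _
        rintro rfl; exact hm.2 hp
  have := key (Finset.univ.erase m) (by simp)
  rwa [sum_erase_smul_e x m hx] at this

/-- The first `k` columns are standard. -/
def Good (k : ℕ) (g : SpecialLinearGroup (Fin n) ℤ) : Prop :=
  ∀ c : Fin n, c.1 < k → M g *ᵥ e c = e c

/-- Column `c` of `g`. -/
def colv (g : SpecialLinearGroup (Fin n) ℤ) (c : Fin n) : Fin n → ℤ := M g *ᵥ e c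

lemma col_step {i j : Fin n} (hij : i ≠ j) (t : ℤ) (g : SpecialLinearGroup (Fin n) ℤ) (c : Fin n) :
    colv (T (t • e i) (e j) * g) c = colv g c + (colv g c j * t) • e i := by
  unfold colv
  rw [M_mul, ← mulVec_mulVec, T_mulVec (e_dot_smul_ne hij t), e_dot, mul_smul]

lemma good_step {k : ℕ} {g : SpecialLinearGroup (Fin n) ℤ} (hg : Good k g) {i j : Fin n}
    (hij : i ≠ j) (hj : k ≤ j.1) (t : ℤ) : Good k (T (t • e i) (e j) * g) := by
  intro c hc
  have h1 := col_step hij t g c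
  have h2 : colv g c = e c := hg c hc
  have h3 : e c j = 0 := by
    have : j ≠ c := by rintro rfl; omega
    simp [e, this]
  rw [h2, h3] at h1
  simpa [colv] using h1

lemma euclid (k : Fin n) (N : ℕ) : ∀ g : SpecialLinearGroup (Fin n) ℤ, Good k.1 g →
    ∑ i ∈ Finset.univ.filter (fun i => k ≤ i), (colv g k i).natAbs = N →
    ∃ h ∈ H n, Good k.1 (h * g) ∧ ∃ m, k ≤ m ∧ ∀ i, k ≤ i → i ≠ m → colv (h * g) k i = 0 := by
  induction N using Nat.strong_induction_on with
  | _ N ih =>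
  intro g hg hN
  by_cases hex : ∃ i j, k ≤ i ∧ k ≤ j ∧ i ≠ j ∧ colv g k i ≠ 0 ∧ colv g k j ≠ 0 ∧
      (colv g k j).natAbs ≤ (colv g k i).natAbs
  · obtain ⟨i, j, hi, hj, hij, hvi, hvj, hle⟩ := hex
    set t := -(colv g k i / colv g k j) with ht
    set g' := T (t • e i) (e j) * g with hg'
    have hcol := col_step hij t g k
    have hi' : colv g' k i = colv g k i % colv g k j := by
      rw [hg', hcol, Int.emod_def, ht]; simp [e]; ring
    have hother : ∀ l, l ≠ i → colv g' k l = colv g k l := by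
      intro l hl
      rw [hg', hcol]; simp [e, hl]
    have hlt : ∑ i ∈ Finset.univ.filter (fun i => k ≤ i), (colv g' k i).natAbs < N := by
      rw [← hN]
      refine Finset.sum_lt_sum (fun l _ => ?_) ⟨i, by simp [hi], ?_⟩
      · by_cases hl : l = i
        · subst hl
          rw [hi']
          have h1 := Int.emod_nonneg (colv g k l) hvj
          have h2 := Int.emod_lt_abs (colv g k l) hvj
          rw [Int.abs_eq_natAbs] at h2
          generalize colv g k l % colv g k j = r at *
          omega
        · rw [hother l hl]
      · rw [hi']
        have h1 := Int.emod_nonneg (colv g k i) hvj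
        have h2 := Int.emod_lt_abs (colv g k i) hvj
        rw [Int.abs_eq_natAbs] at h2
        generalize colv g k i % colv g k j = r at *
        omega
    obtain ⟨h, hh, hgood, m, hm, hz⟩ := ih _ hlt g' (good_step hg hij hj t) rfl
    refine ⟨h * T (t • e i) (e j), Subgroup.mul_mem _ hh (elem_mem hij t), ?_, m, hm, ?_⟩
    · rw [mul_assoc]; exact hgood
    · rw [mul_assoc]; exact hz
  · refine ⟨1, Subgroup.one_mem _, by rwa [one_mul], ?_⟩
    rw [one_mul]
    by_cases h0 : ∃ m, k ≤ m ∧ colv g k m ≠ 0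
    · obtain ⟨m, hm, hvm⟩ := h0
      refine ⟨m, hm, fun i hi him => ?_⟩
      by_contra hvi
      apply hex
      rcases le_total (colv g k i).natAbs (colv g k m).natAbs with hl | hl
      · exact ⟨m, i, hm, hi, him.symm, hvm, hvi, hl⟩
      · exact ⟨i, m, hi, hm, him, hvi, hvm, hl⟩
    · push Not at h0
      exact ⟨k, le_rfl, fun i hi _ => h0 i hi⟩

lemma unit_entry (k : Fin n) (g : SpecialLinearGroup (Fin n) ℤ) (hg : Good k.1 g) (m : Fin n)
    (hz : ∀ i, k ≤ i → i ≠ m → colv g k i = 0) : colv g k m * colv g k m = 1 := by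
  have hr : ∀ c, (e k ᵥ* M g⁻¹) ⬝ᵥ colv g c = e k c := by
    intro c
    unfold colv
    rw [conj_dot, e_dot]
    simp [e, Pi.single_apply, eq_comm]
  have hr0 : ∀ i, i < k → (e k ᵥ* M g⁻¹) i = 0 := by
    intro i hi
    have h1 := hr i
    have h2 : colv g i = e i := hg i hi
    rw [h2, dot_e] at h1
    rw [h1]; simp [e, hi.ne]
  have h1 := hr k
  rw [dotProduct, Finset.sum_eq_single m] at h1
  · have h2 : e k k = 1 := by simp [e]
    rw [h2] at h1
    have : IsUnit (colv g k m) := IsUnit.of_mul_eq_one _ (by rw [mul_comm]; exact h1)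
    rcases Int.isUnit_iff.mp this with h | h <;> rw [h] <;> norm_num
  · intro i _ him
    rcases lt_or_ge i k with h | h
    · rw [hr0 i h, zero_mul]
    · rw [hz i h him, mul_zero]
  · simp

lemma last_entry (k : Fin n) (g : SpecialLinearGroup (Fin n) ℤ) (hg : Good k.1 g)
    (hk : k.1 + 1 = n) : colv g k k = 1 := by
  have hent : ∀ i j : Fin n, M g i j = colv g j i := by
    intro i j; simp [colv, e]
  have htri : (M g).BlockTriangular id := by
    intro i j hij
    have hij' : j < i := hij
    have h2 : colv g j = e j := hg j (by have := i.2; have : j.1 < i.1 := hij'; omega)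
    rw [hent, h2]; simp [e, hij'.ne']
  have hd := M_det g
  rw [det_of_upperTriangular htri, Finset.prod_eq_single k] at hd
  · rw [← hent]; exact hd
  · intro j _ hj
    have h2 : colv g j = e j := hg j (by
      have := j.2
      have : j.1 ≠ k.1 := fun h => hj (Fin.ext h)
      omega)
    rw [hent, h2]; simp [e]
  · simp

lemma make_one_aux (k m : Fin n) (hm : k ≤ m) (hmk : k ≠ m) (g : SpecialLinearGroup (Fin n) ℤ)
    (hg : Good k.1 g) (hu : colv g k m * colv g k m = 1) :
    ∃ h ∈ H n, Good k.1 (h * g) ∧ colv (h * g) k k = 1 := by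
  refine ⟨T (((1 - colv g k k) * colv g k m) • e k) (e m), elem_mem hmk _, good_step hg hmk hm _, ?_⟩
  rw [col_step hmk]
  simp [e]
  linear_combination (1 - colv g k k) * hu

lemma make_one (k : Fin n) (g : SpecialLinearGroup (Fin n) ℤ) (hg : Good k.1 g) :
    ∃ h ∈ H n, Good k.1 (h * g) ∧ colv (h * g) k k = 1 := by
  obtain ⟨h, hh, hgood, m, hm, hz⟩ := euclid k _ g hg rfl
  have hu := unit_entry k _ hgood m hz
  by_cases hmk : k = m
  · subst hmk
    by_cases hk : k.1 + 1 = n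
    · exact ⟨h, hh, hgood, last_entry k _ hgood hk⟩
    · let l : Fin n := ⟨k.1 + 1, by have := k.2; omega⟩
      have hkl : k ≤ l := by simp [l, Fin.le_def]
      have hlk : l ≠ k := by simp [l, Fin.ext_iff]
      set t := (1 - colv (h * g) k l) * colv (h * g) k k with ht
      have hcol := col_step hlk t (h * g) k
      have hl : colv (T (t • e l) (e k) * (h * g)) k l = 1 := by
        rw [hcol, ht]; simp [e]
        linear_combination (1 - colv (h * g) k l) * hu
      obtain ⟨h', hh', hg', h1⟩ := make_one_aux k l hkl hlk.symm (T (t • e l) (e k) * (h * g))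
        (good_step hgood hlk le_rfl t) (by rw [hl]; norm_num)
      refine ⟨h' * (T (t • e l) (e k) * h), Subgroup.mul_mem _ hh'
        (Subgroup.mul_mem _ (elem_mem hlk t) hh), ?_, ?_⟩
      · simpa only [mul_assoc] using hg'
      · simpa only [mul_assoc] using h1
  · obtain ⟨h', hh', hg', h1⟩ := make_one_aux k m hm hmk _ hgood hu
    refine ⟨h' * h, Subgroup.mul_mem _ hh' hh, ?_, ?_⟩
    · simpa only [mul_assoc] using hg'
    · simpa only [mul_assoc] using h1

lemma next_good (k : Fin n) (g : SpecialLinearGroup (Fin n) ℤ) (hg : Good k.1 g) :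
    ∃ h ∈ H n, Good (k.1 + 1) (h * g) := by
  obtain ⟨h, hh, hgood, h1⟩ := make_one k g hg
  set v := colv (h * g) k with hv
  have hx : (e k - v) k = 0 := by simp [e, h1]
  refine ⟨T (e k - v) (e k) * h, Subgroup.mul_mem _ (col_mem _ k hx) hh, ?_⟩
  intro c hc
  rw [mul_assoc, M_mul, ← mulVec_mulVec, T_mulVec (by rw [e_dot, hx]), e_dot]
  by_cases hck : c = k
  · subst hck
    change v + v c • (e c - v) = e c
    rw [h1, one_smul]; abel
  · have : c.1 < k.1 := by
      have : c.1 ≠ k.1 := fun h => hck (Fin.ext h)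
      omega
    rw [hgood c this]
    have : e c k = 0 := by simp [e, Ne.symm hck]
    rw [this, zero_smul, add_zero]

lemma all_good (k : ℕ) (hk : k ≤ n) (g : SpecialLinearGroup (Fin n) ℤ) :
    ∃ h ∈ H n, Good k (h * g) := by
  induction k with
  | zero => exact ⟨1, Subgroup.one_mem _, fun c hc => absurd hc (Nat.not_lt_zero _)⟩
  | succ k ih =>
    obtain ⟨h, hh, hg⟩ := ih (by omega)
    obtain ⟨h', hh', hg'⟩ := next_good ⟨k, by omega⟩ _ hg
    exact ⟨h' * h, Subgroup.mul_mem _ hh' hh, by rw [mul_assoc]; exact hg'⟩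

lemma H_eq_top : H n = ⊤ := by
  rw [eq_top_iff]
  intro g _
  obtain ⟨h, hh, hg⟩ := all_good n le_rfl g
  have h1 : h * g = 1 := by
    apply M_inj
    ext i j
    have := congrFun (hg j j.2) i
    rw [M_one]
    simpa [e, Pi.single_apply, one_apply] using this
  rw [eq_inv_of_mul_eq_one_right h1]
  exact Subgroup.inv_mem _ hh

end Generation

lemma elem_commutator (hn : 3 ≤ n) {i j : Fin n} (hij : i ≠ j) :
    T (e i) (e j) ∈ commutator (SpecialLinearGroup (Fin n) ℤ) := by
  obtain ⟨k, hki, hkj⟩ := exists_third hn i j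
  have h1 := T_conj_T (y := e i) (b := e k) (x := e k) (d := e j)
    (e_dot_ne hki.symm) (e_dot_ne hkj)
  have h11 : e k ⬝ᵥ e k = 1 := by rw [e_dot]; simp [e]
  rw [h11, one_smul, e_dot_ne hij, zero_smul, sub_zero, add_comm,
    T_add_left (e_dot_ne hij) (e_dot_ne hkj)] at h1
  rw [← mul_inv_eq_iff_eq_mul.mpr h1]
  rw [commutator_eq_closure]
  exact Subgroup.subset_closure ⟨_, _, rfl⟩

theorem main (hn : 3 ≤ n) (N : Subgroup (SpecialLinearGroup (Fin n) ℤ)) (hN : N.Normal) :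
    (N : Set (SpecialLinearGroup (Fin n) ℤ)).Finite ∨ N.FiniteIndex := by
  rcases finite_or_P hn N hN with h | h
  · exact Or.inl h
  right
  let φ := QuotientGroup.mk' N
  have hφs : Function.Surjective φ := QuotientGroup.mk'_surjective N
  have hφ : ∀ i j : Fin n, i ≠ j → IsOfFinOrder (φ (T (e i) (e j))) := by
    intro i j hij
    obtain ⟨q, hq, hT⟩ := h i j hij
    rw [isOfFinOrder_iff_zpow_eq_one]
    refine ⟨q, hq, ?_⟩
    rw [← map_zpow, T_zpow (e_dot_ne hij)]
    exact (QuotientGroup.eq_one_iff _).mpr hT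
  have hfin : Finite (SpecialLinearGroup (Fin n) ℤ ⧸ N) := by
    refine finite_of_conj (ι := {p : Fin n × Fin n // p.1 ≠ p.2})
      (fun p => φ (T (e p.1.1) (e p.1.2))) ?_ ?_ ?_
    · have h1 := congrArg (Subgroup.map φ) (H_eq_top (n := n))
      rw [H, MonoidHom.map_closure, ← Set.range_comp, Subgroup.map_top_of_surjective _ hφs] at h1
      exact h1
    · rintro ⟨⟨i, j⟩, hij⟩
      have h1 : φ (T (e i) (e j)) ∈ (commutator (SpecialLinearGroup (Fin n) ℤ)).map φ :=
        ⟨_, elem_commutator hn hij, rfl⟩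
      rw [commutator_def, Subgroup.map_commutator] at h1
      rw [commutator_def]
      exact Subgroup.commutator_mono le_top le_top h1
    · rintro ⟨⟨i, j⟩, hij⟩
      refine (fin_conj φ hn hφ hij).subset ?_
      rintro _ ⟨g, rfl⟩
      obtain ⟨g, rfl⟩ := hφs g
      exact ⟨g, by simp⟩
  exact Subgroup.finiteIndex_of_finite_quotient

end SLZ

/-- For `n ≥ 3`, every normal subgroup of `SL(n, ℤ)` is finite or of finite index. -/
theorem stmt_12 (n : ℕ) (hn : 3 ≤ n) (N : Subgroup (SpecialLinearGroup (Fin n) ℤ))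
    (hN : N.Normal) :
    (N : Set (SpecialLinearGroup (Fin n) ℤ)).Finite ∨ N.FiniteIndex :=
  SLZ.main hn N hN
end

section
/- Let n ≥ 5 be an integer and let H be a finite-index subgroup of SL(n, ℤ). Then every group homomorphism from H to GL(4, ℝ) has finite image. -/
open Matrix

namespace SLn

section LinAlg

variable {V : Type*} [AddCommGroup V] [Module ℂ V]

/-- Eigenvalues of a central commutator are roots of unity. -/
lemma eigen_root [FiniteDimensional ℂ V] (x y z : Module.End ℂ V)
    (hx : Function.Injective x) (hy : Function.Injective y)
    (hxy : x * y = z * (y * x)) (hzx : z * x = x * z) (hzy : z * y = y * z)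
    (μ : ℂ) (hμ : z.HasEigenvalue μ) :
    μ ^ Module.finrank ℂ (Module.End.eigenspace z μ) = 1 := by
  set E := Module.End.eigenspace z μ with hE
  have hxE : ∀ v ∈ E, x v ∈ E := by
    intro v hv
    rw [hE, Module.End.mem_eigenspace_iff] at hv ⊢
    have := LinearMap.congr_fun hzx v
    simp only [Module.End.mul_apply] at this
    rw [this, hv, map_smul]
  have hyE : ∀ v ∈ E, y v ∈ E := by
    intro v hv
    rw [hE, Module.End.mem_eigenspace_iff] at hv ⊢
    have := LinearMap.congr_fun hzy v
    simp only [Module.End.mul_apply] at this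
    rw [this, hv, map_smul]
  set X : E →ₗ[ℂ] E := x.restrict hxE
  set Y : E →ₗ[ℂ] E := y.restrict hyE
  have hXY : X * Y = μ • (Y * X) := by
    ext v
    have h1 := LinearMap.congr_fun hxy v
    simp only [Module.End.mul_apply] at h1
    have h2 : z (y (x v)) = μ • y (x v) :=
      (Module.End.mem_eigenspace_iff).1 (hyE _ (hxE _ v.2))
    simpa [X, Y, LinearMap.restrict_apply, h2] using h1
  have hX : LinearMap.det X ≠ 0 := by
    have : LinearMap.ker X = ⊥ := by
      rw [LinearMap.ker_eq_bot]
      intro a b hab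
      have := congrArg Subtype.val hab
      exact Subtype.ext (hx this)
    have := LinearMap.isUnit_det X ((LinearMap.isUnit_iff_ker_eq_bot X).2 this)
    exact this.ne_zero
  have hY : LinearMap.det Y ≠ 0 := by
    have : LinearMap.ker Y = ⊥ := by
      rw [LinearMap.ker_eq_bot]
      intro a b hab
      have := congrArg Subtype.val hab
      exact Subtype.ext (hy this)
    have := LinearMap.isUnit_det Y ((LinearMap.isUnit_iff_ker_eq_bot Y).2 this)
    exact this.ne_zero
  have h := congrArg LinearMap.det hXY
  rw [LinearMap.det_smul, map_mul, map_mul] at h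
  have h0 : LinearMap.det X * LinearMap.det Y ≠ 0 := mul_ne_zero hX hY
  apply mul_right_cancel₀ h0
  rw [one_mul]
  conv_rhs => rw [h]
  ring

lemma nilp_of_eigen [FiniteDimensional ℂ V] (w : Module.End ℂ V)
    (h : ∀ μ, w.HasEigenvalue μ → μ = 0) : IsNilpotent w := by
  rw [LinearMap.isNilpotent_iff_charpoly]
  have hs := (IsAlgClosed.splits w.charpoly).eq_prod_roots_of_monic w.charpoly_monic
  have hr : w.charpoly.roots = Multiset.replicate (Multiset.card w.charpoly.roots) 0 := by
    rw [Multiset.eq_replicate]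
    refine ⟨rfl, fun b hb => h b ?_⟩
    rw [Module.End.hasEigenvalue_iff_isRoot_charpoly]
    exact Polynomial.isRoot_of_mem_roots hb
  have hc : Multiset.card w.charpoly.roots = Module.finrank ℂ V := by
    rw [← (IsAlgClosed.splits w.charpoly).natDegree_eq_card_roots, LinearMap.charpoly_natDegree]
  rw [hs, hr, hc]
  simp

lemma unip_of_comm [FiniteDimensional ℂ V] (hV : Module.finrank ℂ V = 4) (x y z : Module.End ℂ V)
    (hx : Function.Injective x) (hy : Function.Injective y)
    (hxy : x * y = z * (y * x)) (hzx : z * x = x * z) (hzy : z * y = y * z) :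
    IsNilpotent (z ^ 24 - 1) := by
  apply nilp_of_eigen
  intro μ hμ
  rw [Module.End.hasEigenvalue_iff_mem_spectrum] at hμ
  have hp : z ^ 24 - 1 = Polynomial.aeval z (Polynomial.X ^ 24 - 1 : Polynomial ℂ) := by simp
  rw [hp, spectrum.map_polynomial_aeval_of_degree_pos] at hμ
  · obtain ⟨l, hl, rfl⟩ := hμ
    rw [← Module.End.hasEigenvalue_iff_mem_spectrum] at hl
    have h1 := eigen_root x y z hx hy hxy hzx hzy l hl
    have hle : Module.finrank ℂ (Module.End.eigenspace z l) ≤ 4 := hV ▸ Submodule.finrank_le _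
    have hpos : 0 < Module.finrank ℂ (Module.End.eigenspace z l) := by
      rw [Module.finrank_pos_iff, Submodule.nontrivial_iff_ne_bot]
      exact hl
    have hd : Module.finrank ℂ (Module.End.eigenspace z l) ∣ 24 := by
      generalize Module.finrank ℂ (Module.End.eigenspace z l) = d at hle hpos
      interval_cases d <;> decide
    obtain ⟨c, hc⟩ := hd
    have : l ^ 24 = 1 := by rw [hc, pow_mul, h1, one_pow]
    simp [this]
  · have : (Polynomial.X ^ 24 - 1 : Polynomial ℂ) = Polynomial.X ^ 24 - Polynomial.C 1 := by simp
    rw [this, Polynomial.degree_X_pow_sub_C (by norm_num)]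
    norm_num

lemma nil_step (T : Module.End ℂ V) (hT : IsNilpotent T) (F : Submodule ℂ V) (W : Set V)
    (hW : ∀ w ∈ W, T w ∈ W) (v : V) (hv : v ∈ W) (hvF : v ∉ F) :
    ∃ v ∈ W, v ∉ F ∧ T v ∈ F := by
  classical
  obtain ⟨N, hN⟩ := hT
  have hex : ∃ k, (T ^ k) v ∈ F := ⟨N, by simp [hN]⟩
  have hall : ∀ k, (T ^ k) v ∈ W := by
    intro k
    induction k with
    | zero => simpa using hv
    | succ k ih => rw [pow_succ']; exact hW _ ih
  have hk := Nat.find_spec hex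
  have hmin := fun m => Nat.find_min hex (m := m)
  generalize Nat.find hex = k at hk hmin
  cases k with
  | zero => exact absurd (by simpa using hk) hvF
  | succ k =>
    refine ⟨_, hall k, hmin k (Nat.lt_succ_self k), ?_⟩
    rw [pow_succ'] at hk
    exact hk

lemma flag_step {ι : Type*} [Fintype ι] (g : ι → Module.End ℂ V) (z : Module.End ℂ V)
    (hg : ∀ i, IsNilpotent (g i - 1)) (hz : IsNilpotent (z - 1))
    (hzg : ∀ i, z * g i = g i * z)
    (hgg : ∀ i j, g i * g j = g j * g i ∨ g i * g j = z * (g j * g i) ∨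
      g j * g i = z * (g i * g j))
    (F : Submodule ℂ V) (hF : F ≠ ⊤) (hFg : ∀ i, ∀ v ∈ F, g i v ∈ F) :
    ∃ v, v ∉ F ∧ z v - v ∈ F ∧ ∀ i, g i v - v ∈ F := by
  classical
  suffices H : ∀ t : Finset ι, ∃ v, v ∉ F ∧ z v - v ∈ F ∧ ∀ i ∈ t, g i v - v ∈ F by
    obtain ⟨v, h1, h2, h3⟩ := H Finset.univ
    exact ⟨v, h1, h2, fun i => h3 i (Finset.mem_univ i)⟩
  have hzg' : ∀ i v, z (g i v) = g i (z v) := fun i v => LinearMap.congr_fun (hzg i) v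
  intro t
  induction t using Finset.induction_on with
  | empty =>
    obtain ⟨v, hv⟩ : ∃ v, v ∉ F := by
      by_contra! h
      exact hF (Submodule.eq_top_iff'.2 h)
    obtain ⟨w, _, h1, h2⟩ := nil_step (z - 1) hz F Set.univ (fun _ _ => trivial) v trivial hv
    exact ⟨w, h1, by simpa using h2, by simp⟩
  | insert j t hj ih =>
    obtain ⟨v, h1, h2, h3⟩ := ih
    obtain ⟨w, hw, h4, h5⟩ := nil_step (g j - 1) (hg j) F
      {v | z v - v ∈ F ∧ ∀ i ∈ t, g i v - v ∈ F} (by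
        rintro w ⟨hw1, hw2⟩
        refine ⟨?_, fun i hi => ?_⟩
        · have : z ((g j - 1) w) - (g j - 1) w = g j (z w - w) - (z w - w) := by
            simp [hzg']; abel
          rw [this]
          exact F.sub_mem (hFg _ _ hw1) hw1
        · have hc : g i (g j w) - g j (g i w) ∈ F := by
            rcases hgg i j with h | h | h
            · have := LinearMap.congr_fun h w
              simp only [Module.End.mul_apply] at this
              simp [this]
            · have := LinearMap.congr_fun h w
              simp only [Module.End.mul_apply] at this
              rw [this, hzg', hzg', ← map_sub, ← map_sub]
              exact hFg _ _ (hFg _ _ hw1)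
            · have := LinearMap.congr_fun h w
              simp only [Module.End.mul_apply] at this
              rw [this, hzg', hzg', ← map_sub, ← map_sub, ← neg_sub, map_neg, map_neg]
              exact F.neg_mem (hFg _ _ (hFg _ _ hw1))
          have : g i ((g j - 1) w) - (g j - 1) w = (g i (g j w) - g j (g i w))
              + (g j (g i w - w) - (g i w - w)) := by
            simp; abel
          rw [this]
          exact F.add_mem hc (F.sub_mem (hFg _ _ (hw2 i hi)) (hw2 i hi)))
      v ⟨h2, h3⟩ h1
    refine ⟨w, h4, hw.1, fun i hi => ?_⟩
    rcases Finset.mem_insert.1 hi with rfl | hi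
    · simpa using h5
    · exact hw.2 i hi

lemma flag_exists [FiniteDimensional ℂ V] {ι : Type*} [Fintype ι]
    (g : ι → Module.End ℂ V) (z : Module.End ℂ V)
    (hg : ∀ i, IsNilpotent (g i - 1)) (hz : IsNilpotent (z - 1))
    (hzg : ∀ i, z * g i = g i * z)
    (hgg : ∀ i j, g i * g j = g j * g i ∨ g i * g j = z * (g j * g i) ∨
      g j * g i = z * (g i * g j)) (k : ℕ) (hk : k ≤ Module.finrank ℂ V) :
    ∃ v : Fin k → V, LinearIndependent ℂ v ∧
      (∀ j, z (v j) - v j ∈ Submodule.span ℂ (v '' Set.Iio j)) ∧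
      (∀ i j, g i (v j) - v j ∈ Submodule.span ℂ (v '' Set.Iio j)) := by
  induction k with
  | zero => exact ⟨Fin.elim0, linearIndependent_empty_type, fun j => j.elim0, fun _ j => j.elim0⟩
  | succ k ih =>
    obtain ⟨v, hv, h1, h2⟩ := ih (by omega)
    have hmem : ∀ j, v j ∈ Submodule.span ℂ (Set.range v) :=
      fun j => Submodule.subset_span ⟨j, rfl⟩
    have hF : Submodule.span ℂ (Set.range v) ≠ ⊤ := by
      intro h
      have := finrank_span_eq_card hv
      rw [h, finrank_top, Fintype.card_fin] at this
      omega
    have hFg : ∀ i, ∀ w ∈ Submodule.span ℂ (Set.range v),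
        g i w ∈ Submodule.span ℂ (Set.range v) := by
      intro i w hw
      induction hw using Submodule.span_induction with
      | mem x hx =>
        obtain ⟨j, rfl⟩ := hx
        have := Submodule.span_mono (Set.image_subset_range _ _) (h2 i j)
        have h := Submodule.add_mem _ this (hmem j)
        simpa using h
      | zero => simp
      | add x y _ _ hx hy => rw [map_add]; exact Submodule.add_mem _ hx hy
      | smul a x _ hx => rw [map_smul]; exact Submodule.smul_mem _ _ hx
    obtain ⟨w, hw1, hw2, hw3⟩ := flag_step g z hg hz hzg hgg _ hF hFg
    have hI : ∀ j : Fin k, v '' Set.Iio j ⊆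
        (Fin.snoc v w : Fin (k+1) → V) '' Set.Iio j.castSucc := by
      rintro j _ ⟨i, hi, rfl⟩
      exact ⟨i.castSucc, by simpa using hi, by simp⟩
    have hL : Set.range v ⊆ (Fin.snoc v w : Fin (k+1) → V) '' Set.Iio (Fin.last k) := by
      rintro _ ⟨i, rfl⟩
      exact ⟨i.castSucc, Fin.castSucc_lt_last i, by simp⟩
    refine ⟨Fin.snoc v w, linearIndependent_finSnoc.2 ⟨hv, hw1⟩, ?_, ?_⟩
    · intro j
      induction j using Fin.lastCases with
      | last => simpa using Submodule.span_mono hL hw2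
      | cast j => simpa using Submodule.span_mono (hI j) (h1 j)
    · intro i j
      induction j using Fin.lastCases with
      | last => simpa using Submodule.span_mono hL (hw3 i)
      | cast j => simpa using Submodule.span_mono (hI j) (h2 i j)

/-- Upper unitriangular matrices. -/
def Uni (M : Matrix (Fin 4) (Fin 4) ℂ) : Prop :=
  M 0 0 = 1 ∧ M 1 1 = 1 ∧ M 2 2 = 1 ∧ M 3 3 = 1 ∧
  M 1 0 = 0 ∧ M 2 0 = 0 ∧ M 3 0 = 0 ∧ M 2 1 = 0 ∧ M 3 1 = 0 ∧ M 3 2 = 0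

lemma uni_toMatrix (b : Module.Basis (Fin 4) ℂ V) (f : Module.End ℂ V)
    (h : ∀ j, f (b j) - b j ∈ Submodule.span ℂ (b '' Set.Iio j)) :
    Uni (LinearMap.toMatrix b b f) := by
  have key : ∀ i j, ¬ i < j → LinearMap.toMatrix b b f i j = if i = j then 1 else 0 := by
    intro i j hij
    have h1 : b.repr (f (b j) - b j) i = 0 := by
      have := (b.mem_span_image).1 (h j)
      by_contra hne
      exact hij (this (Finsupp.mem_support_iff.2 hne))
    rw [LinearMap.toMatrix_apply]
    rw [map_sub, Finsupp.sub_apply, sub_eq_zero] at h1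
    rw [h1]
    simp [Finsupp.single_apply, eq_comm]
  refine ⟨?_, ?_, ?_, ?_, ?_, ?_, ?_, ?_, ?_, ?_⟩ <;> rw [key _ _ (by decide)] <;> simp

lemma pf_aux (p q r s : Fin 6 → ℂ) (t : ℂ) (w : Fin 6 → Fin 6 → ℂ)
    (hw : ∀ i j, w i j = p i * q j - p j * q i + (r i * s j - r j * s i))
    (h03 : w 0 3 = t) (h14 : w 1 4 = t) (h25 : w 2 5 = t)
    (h01 : w 0 1 = 0) (h02 : w 0 2 = 0) (h12 : w 1 2 = 0)
    (h34 : w 3 4 = 0) (h35 : w 3 5 = 0) (h45 : w 4 5 = 0)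
    (h04 : w 0 4 = 0) (h05 : w 0 5 = 0) (h13 : w 1 3 = 0) (h15 : w 1 5 = 0)
    (h23 : w 2 3 = 0) (h24 : w 2 4 = 0) : t = 0 := by
  have pf : w 0 1 * (w 2 3 * w 4 5 - w 2 4 * w 3 5 + w 2 5 * w 3 4)
    - w 0 2 * (w 1 3 * w 4 5 - w 1 4 * w 3 5 + w 1 5 * w 3 4)
    + w 0 3 * (w 1 2 * w 4 5 - w 1 4 * w 2 5 + w 1 5 * w 2 4)
    - w 0 4 * (w 1 2 * w 3 5 - w 1 3 * w 2 5 + w 1 5 * w 2 3)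
    + w 0 5 * (w 1 2 * w 3 4 - w 1 3 * w 2 4 + w 1 4 * w 2 3) = 0 := by
    simp only [hw]; ring
  simp only [h03, h14, h25, h01, h02, h12, h34, h35, h45, h04, h05, h13, h15, h23, h24] at pf
  have : t ^ 3 = 0 := by linear_combination -pf
  simpa using this

lemma uni_rel (M N Z : Matrix (Fin 4) (Fin 4) ℂ) (hM : Uni M) (hN : Uni N) (hZ : Uni Z)
    (h : M * N = Z * (N * M)) :
    Z 0 1 = 0 ∧ Z 1 2 = 0 ∧ Z 2 3 = 0 ∧
    M 0 1 * N 1 2 - N 0 1 * M 1 2 = Z 0 2 ∧ M 1 2 * N 2 3 - N 1 2 * M 2 3 = Z 1 3 ∧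
    (Z 0 2 = 0 → Z 1 3 = 0 →
      M 0 1 * N 1 3 - N 0 1 * M 1 3 + (M 0 2 * N 2 3 - N 0 2 * M 2 3) = Z 0 3) := by
  obtain ⟨a0, a1, a2, a3, a4, a5, a6, a7, a8, a9⟩ := hM
  obtain ⟨b0, b1, b2, b3, b4, b5, b6, b7, b8, b9⟩ := hN
  obtain ⟨c0, c1, c2, c3, c4, c5, c6, c7, c8, c9⟩ := hZ
  have e : ∀ i j, (M * N) i j = (Z * (N * M)) i j := fun i j => by rw [h]
  simp only [Matrix.mul_apply, Fin.sum_univ_four] at e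
  have e01 := e 0 1
  have e12 := e 1 2
  have e23 := e 2 3
  have e02 := e 0 2
  have e13 := e 1 3
  have e03 := e 0 3
  clear e
  simp only [a0, a1, a2, a3, a4, a5, a6, a7, a8, a9, b0, b1, b2, b3, b4, b5, b6, b7, b8, b9,
    c0, c1, c2, c3, c4, c5, c6, c7, c8, c9] at e01 e12 e23 e02 e13 e03
  have z01 : Z 0 1 = 0 := by linear_combination -e01
  have z12 : Z 1 2 = 0 := by linear_combination -e12
  have z23 : Z 2 3 = 0 := by linear_combination -e23
  simp only [z01, z12, z23] at e02 e13 e03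
  refine ⟨z01, z12, z23, by linear_combination e02, by linear_combination e13, fun h1 h2 => ?_⟩
  simp only [h1, h2] at e03
  linear_combination e03

lemma uni_one : Uni 1 := by
  simp [Uni]

lemma uni_main (M : Fin 6 → Matrix (Fin 4) (Fin 4) ℂ) (Z : Matrix (Fin 4) (Fin 4) ℂ)
    (hM : ∀ i, Uni (M i)) (hZ : Uni Z)
    (hc : ∀ i j : Fin 6, i < j → j ≠ i + 3 → M i * M j = M j * M i)
    (hn : ∀ i j : Fin 6, i < j → j = i + 3 → M i * M j = Z * (M j * M i)) : Z = 1 := by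
  have R := fun i j h1 h2 => uni_rel (M i) (M j) Z (hM i) (hM j) hZ (hn i j h1 h2)
  have S := fun i j h1 h2 => uni_rel (M i) (M j) 1 (hM i) (hM j) uni_one
    (by rw [one_mul]; exact hc i j h1 h2)
  have z02 : Z 0 2 = 0 := by
    refine pf_aux (fun i => M i 0 1) (fun i => M i 1 2) 0 0 (Z 0 2)
      (fun i j => M i 0 1 * M j 1 2 - M j 0 1 * M i 1 2) (by intros; simp)
      ?_ ?_ ?_ ?_ ?_ ?_ ?_ ?_ ?_ ?_ ?_ ?_ ?_ ?_ ?_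
    · exact (R 0 3 (by decide) (by decide)).2.2.2.1
    · exact (R 1 4 (by decide) (by decide)).2.2.2.1
    · exact (R 2 5 (by decide) (by decide)).2.2.2.1
    all_goals exact (S _ _ (by decide) (by decide)).2.2.2.1.trans (by simp)
  have z13 : Z 1 3 = 0 := by
    refine pf_aux (fun i => M i 1 2) (fun i => M i 2 3) 0 0 (Z 1 3)
      (fun i j => M i 1 2 * M j 2 3 - M j 1 2 * M i 2 3) (by intros; simp)
      ?_ ?_ ?_ ?_ ?_ ?_ ?_ ?_ ?_ ?_ ?_ ?_ ?_ ?_ ?_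
    · exact (R 0 3 (by decide) (by decide)).2.2.2.2.1
    · exact (R 1 4 (by decide) (by decide)).2.2.2.2.1
    · exact (R 2 5 (by decide) (by decide)).2.2.2.2.1
    all_goals exact (S _ _ (by decide) (by decide)).2.2.2.2.1.trans (by simp)
  have z03 : Z 0 3 = 0 := by
    refine pf_aux (fun i => M i 0 1) (fun i => M i 1 3) (fun i => M i 0 2) (fun i => M i 2 3)
      (Z 0 3)
      (fun i j => M i 0 1 * M j 1 3 - M j 0 1 * M i 1 3 +
        (M i 0 2 * M j 2 3 - M j 0 2 * M i 2 3)) (by intros; simp)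
      ?_ ?_ ?_ ?_ ?_ ?_ ?_ ?_ ?_ ?_ ?_ ?_ ?_ ?_ ?_
    · exact (R 0 3 (by decide) (by decide)).2.2.2.2.2 z02 z13
    · exact (R 1 4 (by decide) (by decide)).2.2.2.2.2 z02 z13
    · exact (R 2 5 (by decide) (by decide)).2.2.2.2.2 z02 z13
    all_goals exact ((S _ _ (by decide) (by decide)).2.2.2.2.2 (by simp) (by simp)).trans (by simp)
  obtain ⟨z01, z12, z23, -⟩ := R 0 3 (by decide) (by decide)
  obtain ⟨c0, c1, c2, c3, c4, c5, c6, c7, c8, c9⟩ := hZ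
  ext i j
  fin_cases i <;> fin_cases j <;> simp [*]

/-- Unipotent representations of the Heisenberg group of rank `3` in dimension four
kill the centre. -/
lemma heis_end [FiniteDimensional ℂ V] (hV : Module.finrank ℂ V = 4)
    (g : Fin 6 → Module.End ℂ V) (z : Module.End ℂ V)
    (hg : ∀ i, IsNilpotent (g i - 1)) (hz : IsNilpotent (z - 1))
    (hzg : ∀ i, z * g i = g i * z)
    (hc : ∀ i j : Fin 6, i < j → j ≠ i + 3 → g i * g j = g j * g i)
    (hn : ∀ i j : Fin 6, i < j → j = i + 3 → g i * g j = z * (g j * g i)) : z = 1 := by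
  have hgg : ∀ i j, g i * g j = g j * g i ∨ g i * g j = z * (g j * g i) ∨
      g j * g i = z * (g i * g j) := by
    intro i j
    rcases lt_trichotomy i j with h | h | h
    · by_cases h' : j = i + 3
      · exact Or.inr (Or.inl (hn i j h h'))
      · exact Or.inl (hc i j h h')
    · subst h; exact Or.inl rfl
    · by_cases h' : i = j + 3
      · exact Or.inr (Or.inr (hn j i h h'))
      · exact Or.inl (hc j i h h').symm
  obtain ⟨v, hv, h1, h2⟩ := flag_exists g z hg hz hzg hgg 4 hV.ge
  let b := basisOfLinearIndependentOfCardEqFinrank hv (by simp [hV])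
  have hb : ⇑b = v := coe_basisOfLinearIndependentOfCardEqFinrank hv _
  have hZ : LinearMap.toMatrix b b z = 1 := by
    apply uni_main (fun i => LinearMap.toMatrix b b (g i))
    · exact fun i => uni_toMatrix b _ (by rw [hb]; exact h2 i)
    · exact uni_toMatrix b _ (by rw [hb]; exact h1)
    · intro i j h h'
      rw [← LinearMap.toMatrix_mul, ← LinearMap.toMatrix_mul, hc i j h h']
    · intro i j h h'
      rw [← LinearMap.toMatrix_mul, ← LinearMap.toMatrix_mul, ← LinearMap.toMatrix_mul, hn i j h h']
  apply (LinearMap.toMatrix b b).injective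
  rw [hZ, LinearMap.toMatrix_one]

end LinAlg
section Elem

variable {ι : Type*} [DecidableEq ι] [Fintype ι]

/-- Elementary matrix in `SL`. -/
abbrev e {i j : ι} (h : i ≠ j) (a : ℤ) : SpecialLinearGroup ι ℤ :=
  SpecialLinearGroup.transvection h a

lemma e_add {i j : ι} (h : i ≠ j) (a b : ℤ) : e h (a + b) = e h a * e h b :=
  SpecialLinearGroup.transvection_add h a b

lemma e_zero {i j : ι} (h : i ≠ j) : e h 0 = 1 :=
  SpecialLinearGroup.transvection_coeff_zero h

lemma e_pow {i j : ι} (h : i ≠ j) (a : ℤ) (k : ℕ) : e h a ^ k = e h (k * a) := by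
  induction k with
  | zero => simp [e_zero]
  | succ k ih => rw [pow_succ, ih, ← e_add]; congr 1; push_cast; ring

lemma e_comm {i j k l : ι} (h : i ≠ j) (h' : k ≠ l) (hjk : j ≠ k) (hil : i ≠ l) (a b : ℤ) :
    e h a * e h' b = e h' b * e h a := by
  apply Subtype.ext
  simp [SpecialLinearGroup.transvection_coe, mul_add, add_mul,
    single_mul_single_of_ne _ _ _ _ hjk, single_mul_single_of_ne _ _ _ _ hil.symm]
  abel

lemma e_heis {i j l : ι} (h : i ≠ j) (h' : j ≠ l) (hil : i ≠ l) (a b : ℤ) :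
    e h a * e h' b = e hil (a * b) * (e h' b * e h a) := by
  apply Subtype.ext
  simp [SpecialLinearGroup.transvection_coe, mul_add, add_mul,
    single_mul_single_of_ne _ _ _ _ h.symm, single_mul_single_of_ne _ _ _ _ hil.symm,
    single_mul_single_of_ne _ _ _ _ h'.symm]
  abel

lemma rep_kill {V : Type*} [AddCommGroup V] [Module ℂ V] [FiniteDimensional ℂ V]
    (hV : Module.finrank ℂ V = 4) (hι : 5 ≤ Fintype.card ι)
    (N : Subgroup (SpecialLinearGroup ι ℤ)) (k : ℕ)
    (hN : ∀ (i j : ι) (h : i ≠ j) (a : ℤ), (k : ℤ) ∣ a → e h a ∈ N)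
    (F : SpecialLinearGroup ι ℤ → Module.End ℂ V) (hF1 : F 1 = 1)
    (hF : ∀ x ∈ N, ∀ y ∈ N, F (x * y) = F x * F y)
    (i l : ι) (hil : i ≠ l) : F (e hil ((24 * k ^ 2 : ℕ) ^ 2 : ℤ)) = 1 := by
  classical
  have hcard : ∀ s : Finset ι, s.card ≤ 4 → ∃ j, j ∉ s := by
    intro s hs
    by_contra! h
    have : s = Finset.univ := Finset.eq_univ_iff_forall.2 h
    rw [this, Finset.card_univ] at hs
    omega
  have hpow : ∀ x ∈ N, ∀ m : ℕ, F (x ^ m) = F x ^ m := by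
    intro x hx m
    induction m with
    | zero => simp [hF1]
    | succ m ih => rw [pow_succ, pow_succ, hF _ (N.pow_mem hx m) _ hx, ih]
  have hinj : ∀ x ∈ N, Function.Injective (F x) := by
    intro x hx a b hab
    have h1 : F x⁻¹ * F x = 1 := by rw [← hF _ (N.inv_mem hx) _ hx]; simp [hF1]
    have h2 := fun v => LinearMap.congr_fun h1 v
    simp only [Module.End.mul_apply, Module.End.one_apply] at h2
    rw [← h2 a, ← h2 b, hab]
  -- unipotence
  have huni : ∀ (i j : ι) (h : i ≠ j) (c : ℕ), IsNilpotent (F (e h ((24 * k ^ 2 : ℕ) : ℤ)) - 1) := by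
    intro i l hil c
    obtain ⟨j, hj⟩ := hcard {i, l} (Finset.card_le_two.trans (by norm_num))
    simp only [Finset.mem_insert, Finset.mem_singleton, not_or] at hj
    have hij : i ≠ j := Ne.symm hj.1
    have hjl : j ≠ l := hj.2
    have m1 := hN i j hij k dvd_rfl
    have m2 := hN j l hjl k dvd_rfl
    have m3 := hN i l hil (k * k) (dvd_mul_right _ _)
    have := unip_of_comm hV (F (e hij k)) (F (e hjl k)) (F (e hil (k * k)))
      (hinj _ m1) (hinj _ m2)
      (by rw [← hF _ m1 _ m2, ← hF _ m2 _ m1, ← hF _ m3 _ (N.mul_mem m2 m1), e_heis])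
      (by rw [← hF _ m3 _ m1, ← hF _ m1 _ m3, e_comm _ _ hil.symm hij])
      (by rw [← hF _ m3 _ m2, ← hF _ m2 _ m3, e_comm _ _ hjl.symm hil])
    rw [← hpow _ m3, e_pow] at this
    convert this using 4
    push_cast; ring
  obtain ⟨j0, h0⟩ := hcard {i, l} (Finset.card_le_two.trans (by norm_num))
  obtain ⟨j1, h1⟩ := hcard {i, l, j0} (Finset.card_le_three.trans (by norm_num))
  obtain ⟨j2, h2⟩ := hcard {i, l, j0, j1} Finset.card_le_four
  simp only [Finset.mem_insert, Finset.mem_singleton, not_or] at h0 h1 h2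
  obtain ⟨h00, h01⟩ := h0
  obtain ⟨h10, h11, h12⟩ := h1
  obtain ⟨h20, h21, h22, h23⟩ := h2
  set K : ℤ := ((24 * k ^ 2 : ℕ) : ℤ) with hK
  have hkK : (k : ℤ) ∣ K := ⟨24 * k, by rw [hK]; push_cast; ring⟩
  let g : Fin 6 → SpecialLinearGroup ι ℤ := ![e (Ne.symm h00) K, e (Ne.symm h10) K,
    e (Ne.symm h20) K, e h01 K, e h11 K, e h21 K]
  have hgN : ∀ m, g m ∈ N := by
    intro m
    fin_cases m
    exacts [hN _ _ (Ne.symm h00) _ hkK, hN _ _ (Ne.symm h10) _ hkK, hN _ _ (Ne.symm h20) _ hkK,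
      hN _ _ h01 _ hkK, hN _ _ h11 _ hkK, hN _ _ h21 _ hkK]
  have hzN : e hil (K ^ 2) ∈ N := hN _ _ _ _ (hkK.trans (Dvd.intro_left (K ^ 1) rfl))
  have hgu : ∀ m, IsNilpotent (F (g m) - 1) := by
    intro m
    fin_cases m
    exacts [huni _ _ (Ne.symm h00) 0, huni _ _ (Ne.symm h10) 0, huni _ _ (Ne.symm h20) 0,
      huni _ _ h01 0, huni _ _ h11 0, huni _ _ h21 0]
  have hzu : IsNilpotent (F (e hil (K ^ 2)) - 1) := by
    have h := huni i l hil 0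
    rw [show e hil (K ^ 2) = e hil K ^ (24 * k ^ 2) by rw [e_pow, ← hK]; congr 1; ring]
    rw [hpow _ (hN _ _ _ _ hkK)]
    obtain ⟨c, hc⟩ := sub_one_dvd_pow_sub_one (F (e hil K)) (24 * k ^ 2)
    have hcm : Commute (F (e hil K) - 1) (∑ i ∈ Finset.range (24 * k ^ 2), F (e hil K) ^ i) := by
      apply Commute.sum_right
      intro b _
      exact ((Commute.refl _).pow_right b).sub_left (Commute.one_left _)
    rw [← mul_geom_sum]
    exact hcm.isNilpotent_mul_right h
  refine heis_end hV (fun m => F (g m)) _ hgu hzu ?_ ?_ ?_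
  · intro m
    rw [← hF _ hzN _ (hgN m), ← hF _ (hgN m) _ hzN]
    congr 1
    fin_cases m
    all_goals
      refine e_comm ?_ ?_ ?_ ?_ _ _ <;> first | assumption | (apply Ne.symm; assumption)
  · intro m m' h h'
    rw [← hF _ (hgN m) _ (hgN m'), ← hF _ (hgN m') _ (hgN m)]
    congr 1
    fin_cases m <;> fin_cases m' <;> first | (exfalso; revert h; decide) | (exfalso; revert h'; decide) | skip
    all_goals
      refine e_comm ?_ ?_ ?_ ?_ _ _ <;> first | assumption | (apply Ne.symm; assumption)
  · intro m m' h h'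
    rw [← hF _ (hgN m) _ (hgN m'), ← hF _ (hgN m') _ (hgN m),
      ← hF _ hzN _ (N.mul_mem (hgN m') (hgN m))]
    congr 1
    fin_cases m <;> fin_cases m' <;> first | (exfalso; revert h; decide) | (exfalso; revert h'; decide) | skip
    all_goals
      rw [pow_two]
      refine e_heis ?_ ?_ ?_ _ _ <;> first | assumption | (apply Ne.symm; assumption)
lemma SL_mul (g x : SpecialLinearGroup ι ℤ) (r c : ι) :
    (g * x) r c = ∑ j, g r j * x j c := Matrix.mul_apply

lemma e_left {i j : ι} (h : i ≠ j) (a : ℤ) (g : SpecialLinearGroup ι ℤ) (r c : ι) :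
    (e h a * g) r c = g r c + if r = i then a * g j c else 0 := by
  by_cases hr : r = i
  · subst hr
    rw [if_pos rfl]
    exact Matrix.transvection_mul_apply_same r j c a g.1
  · rw [if_neg hr, add_zero]
    exact Matrix.transvection_mul_apply_of_ne i j r c hr a g.1

lemma e_right {i j : ι} (h : i ≠ j) (a : ℤ) (g : SpecialLinearGroup ι ℤ) (r c : ι) :
    (g * e h a) r c = g r c + if c = j then a * g r i else 0 := by
  by_cases hr : c = j
  · subst hr
    rw [if_pos rfl]
    exact Matrix.mul_transvection_apply_same i c r a g.1
  · rw [if_neg hr, add_zero]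
    exact Matrix.mul_transvection_apply_of_ne i j r c hr a g.1

/-- Subgroup generated by elementary matrices with indices in `s`. -/
def ES (s : Finset ι) : Subgroup (SpecialLinearGroup ι ℤ) :=
  Subgroup.closure {x | ∃ (i j : ι) (h : i ≠ j) (a : ℤ), i ∈ s ∧ j ∈ s ∧ x = e h a}

lemma e_mem_ES {s : Finset ι} {i j : ι} (h : i ≠ j) (a : ℤ) (hi : i ∈ s) (hj : j ∈ s) :
    e h a ∈ ES s := Subgroup.subset_closure ⟨i, j, h, a, hi, hj, rfl⟩

lemma ES_row {s : Finset ι} {x : SpecialLinearGroup ι ℤ} (hx : x ∈ ES s) {r : ι} (hr : r ∉ s) :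
    ∀ (g : SpecialLinearGroup ι ℤ) (c : ι), (x * g) r c = g r c := by
  induction hx using Subgroup.closure_induction with
  | mem x hx =>
    obtain ⟨i, j, h, a, hi, hj, rfl⟩ := hx
    intro g c
    rw [e_left, if_neg (by rintro rfl; exact hr hi), add_zero]
  | one => intro g c; rw [one_mul]
  | mul x y _ _ hx hy => intro g c; rw [mul_assoc, hx, hy]
  | inv x _ hx => intro g c; rw [← hx (x⁻¹ * g), mul_inv_cancel_left]

lemma ES_col {s : Finset ι} {x : SpecialLinearGroup ι ℤ} (hx : x ∈ ES s) {c : ι} (hc : c ∉ s) :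
    ∀ (g : SpecialLinearGroup ι ℤ) (r : ι), (g * x) r c = g r c := by
  induction hx using Subgroup.closure_induction with
  | mem x hx =>
    obtain ⟨i, j, h, a, hi, hj, rfl⟩ := hx
    intro g r
    rw [e_right, if_neg (by rintro rfl; exact hc hj), add_zero]
  | one => intro g r; rw [mul_one]
  | mul x y _ _ hx hy => intro g r; rw [← mul_assoc, hy, hx]
  | inv x _ hx => intro g r; rw [← hx (g * x⁻¹), inv_mul_cancel_right]

lemma euclid2 {s : Finset ι} {i j : ι} (h : i ≠ j) (hi : i ∈ s) (hj : j ∈ s) (r : ι) (N : ℕ) :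
    ∀ g : SpecialLinearGroup ι ℤ, (g r j).natAbs ≤ N → ∃ x ∈ ES s, (g * x) r j = 0 ∧
      ∀ c, c ≠ i → c ≠ j → (g * x) r c = g r c := by
  induction N with
  | zero =>
    intro g hg
    exact ⟨1, one_mem _, by rw [mul_one]; omega, fun c _ _ => by rw [mul_one]⟩
  | succ N ih =>
    intro g hg
    by_cases hb : g r j = 0
    · exact ⟨1, one_mem _, by rw [mul_one]; exact hb, fun c _ _ => by rw [mul_one]⟩
    set y := e h.symm (-(g r i / g r j)) * e h.symm 1 * e h (-1) * e h.symm 1 with hy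
    have hyS : y ∈ ES s := by
      refine mul_mem (mul_mem (mul_mem ?_ ?_) ?_) ?_ <;> apply e_mem_ES <;> assumption
    have h1 : (g * y) r j = -(g r i % g r j) := by
      rw [hy, ← mul_assoc, ← mul_assoc, ← mul_assoc]
      simp only [e_right, h, h.symm, if_true, if_false]
      rw [Int.emod_def]
      ring
    have h2 : ∀ c, c ≠ i → c ≠ j → (g * y) r c = g r c := by
      intro c hci hcj
      rw [hy, ← mul_assoc, ← mul_assoc, ← mul_assoc]
      simp [e_right, hci, hcj]
    obtain ⟨x, hx, hx1, hx2⟩ := ih (g * y) (by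
      rw [h1, Int.natAbs_neg]
      have h3 := Int.emod_lt_abs (g r i) hb
      rw [Int.abs_eq_natAbs] at h3
      have h4 := Int.emod_nonneg (g r i) hb
      omega)
    refine ⟨y * x, mul_mem hyS hx, by rw [← mul_assoc]; exact hx1, fun c h3 h4 => ?_⟩
    rw [← mul_assoc, hx2 c h3 h4, h2 c h3 h4]

lemma row_reduce {s : Finset ι} {k : ι} (hk : k ∈ s) (r : ι) (g : SpecialLinearGroup ι ℤ) :
    ∃ x ∈ ES s, ∀ j ∈ s, j ≠ k → (g * x) r j = 0 := by
  suffices H : ∀ t : Finset ι, t ⊆ s → k ∉ t → ∃ x ∈ ES s, ∀ j ∈ t, (g * x) r j = 0 by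
    obtain ⟨x, hx, h⟩ := H (s.erase k) (Finset.erase_subset _ _) (by simp)
    exact ⟨x, hx, fun j hj hjk => h j (by simp [hj, hjk])⟩
  intro t
  induction t using Finset.induction_on with
  | empty => exact fun _ _ => ⟨1, one_mem _, by simp⟩
  | insert j t hj ih =>
    intro hs hkt
    simp only [Finset.mem_insert, not_or] at hkt
    obtain ⟨x, hx, h⟩ := ih ((Finset.subset_insert _ _).trans hs) hkt.2
    obtain ⟨y, hy, h1, h2⟩ := euclid2 hkt.1 hk (hs (Finset.mem_insert_self _ _)) r _ (g * x) le_rfl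
    refine ⟨x * y, mul_mem hx hy, fun c hc => ?_⟩
    rw [← mul_assoc]
    rcases Finset.mem_insert.1 hc with rfl | hc
    · exact h1
    · rw [h2 c (fun h => hkt.2 (h ▸ hc)) (fun h => hj (h ▸ hc)), h c hc]

lemma colU (T : Subgroup (SpecialLinearGroup ι ℤ)) (k : ι) (c : ι → ℤ) (hck : c k = 0)
    (hT : ∀ i (h : i ≠ k), e h (c i) ∈ T) :
    ∃ u ∈ T, ∀ (g : SpecialLinearGroup ι ℤ) r j, (u * g) r j = g r j + c r * g k j := by
  suffices H : ∀ t : Finset ι, ∃ u ∈ T, ∀ (g : SpecialLinearGroup ι ℤ) r j,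
      (u * g) r j = g r j + (if r ∈ t then c r else 0) * g k j by
    obtain ⟨u, hu, h⟩ := H Finset.univ
    exact ⟨u, hu, by simpa using h⟩
  intro t
  induction t using Finset.induction_on with
  | empty => exact ⟨1, one_mem _, by simp⟩
  | insert i t hi ih =>
    obtain ⟨u, hu, h⟩ := ih
    by_cases hik : i = k
    · subst hik
      refine ⟨u, hu, fun g r j => ?_⟩
      rw [h]
      by_cases hr : r = i <;> simp [hr, hck]
    · refine ⟨e hik (c i) * u, mul_mem (hT i hik) hu, fun g r j => ?_⟩
      rw [mul_assoc, e_left, h, h]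
      by_cases hr : r = i
      · subst hr; simp [hi, hck]
      · simp [hr]

lemma rowU (T : Subgroup (SpecialLinearGroup ι ℤ)) (k : ι) (c : ι → ℤ) (hck : c k = 0)
    (hT : ∀ i (h : k ≠ i), e h (c i) ∈ T) :
    ∃ u ∈ T, ∀ (g : SpecialLinearGroup ι ℤ) r j, (g * u) r j = g r j + g r k * c j := by
  suffices H : ∀ t : Finset ι, ∃ u ∈ T, ∀ (g : SpecialLinearGroup ι ℤ) r j,
      (g * u) r j = g r j + g r k * (if j ∈ t then c j else 0) by
    obtain ⟨u, hu, h⟩ := H Finset.univ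
    exact ⟨u, hu, by simpa using h⟩
  intro t
  induction t using Finset.induction_on with
  | empty => exact ⟨1, one_mem _, by simp⟩
  | insert i t hi ih =>
    obtain ⟨u, hu, h⟩ := ih
    by_cases hik : k = i
    · subst hik
      refine ⟨u, hu, fun g r j => ?_⟩
      rw [h]
      by_cases hr : j = k <;> simp [hr, hck]
    · refine ⟨u * e hik (c i), mul_mem hu (hT i hik), fun g r j => ?_⟩
      rw [← mul_assoc, e_right, h, h]
      by_cases hr : j = i
      · subst hr; simp [hi, hck, mul_comm]
      · simp [hr]

lemma row_bezout (g : SpecialLinearGroup ι ℤ) (k : ι) : ∃ y : ι → ℤ, ∑ j, g k j * y j = 1 := by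
  refine ⟨fun j => (g⁻¹ : SpecialLinearGroup ι ℤ) j k, ?_⟩
  have : (g * g⁻¹) k k = 1 := by simp
  rw [SL_mul] at this
  exact this

lemma gen_aux (s : Finset ι) : ∀ g : SpecialLinearGroup ι ℤ,
    (∀ i j, i ∉ s ∨ j ∉ s → g i j = (1 : Matrix ι ι ℤ) i j) →
    g ∈ ES (Finset.univ : Finset ι) := by
  have hmono : ∀ s : Finset ι, ES s ≤ ES Finset.univ := by
    intro s
    apply Subgroup.closure_mono
    rintro x ⟨i, j, h, a, -, -, rfl⟩
    exact ⟨i, j, h, a, by simp, by simp, rfl⟩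
  induction s using Finset.induction_on with
  | empty =>
    intro g hg
    have : g = 1 := by
      apply Matrix.SpecialLinearGroup.ext
      intro i j
      rw [hg i j (by simp)]; rfl
    rw [this]; exact one_mem _
  | insert k t hk ih =>
    intro g hg
    -- finish when row `k` is already reduced
    have fin : ∀ g : SpecialLinearGroup ι ℤ,
        (∀ i j, i ∉ insert k t ∨ j ∉ insert k t → g i j = (1 : Matrix ι ι ℤ) i j) →
        (∀ j, g k j = (1 : Matrix ι ι ℤ) k j) → g ∈ ES (Finset.univ : Finset ι) := by
      intro g hg hrow
      obtain ⟨u, hu, hu'⟩ := colU (ES (Finset.univ : Finset ι)) k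
        (fun i => if i = k then 0 else - g i k) (by simp)
        (fun i h => e_mem_ES _ _ (by simp) (by simp))
      have : u * g ∈ ES (Finset.univ : Finset ι) := by
        apply ih
        intro i j hij
        rw [hu', hrow]
        by_cases hjk : j = k
        · subst hjk
          by_cases hi : i = j
          · subst hi; simp [hrow]
          · simp [hi]
        · by_cases hik : i = k
          · subst hik; simp [hrow]
          · rw [Matrix.one_apply_ne (Ne.symm hjk), mul_zero, add_zero]
            apply hg
            simpa [hik, hjk] using hij
      exact (Subgroup.mul_mem_cancel_left _ hu).1 this
    have step : ∀ g : SpecialLinearGroup ι ℤ, ∀ x ∈ ES (insert k t),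
        (∀ i j, i ∉ insert k t ∨ j ∉ insert k t → g i j = (1 : Matrix ι ι ℤ) i j) →
        (∀ i j, i ∉ insert k t ∨ j ∉ insert k t → (g * x) i j = (1 : Matrix ι ι ℤ) i j) := by
      intro g x hx hg i j hij
      by_cases hj : j ∉ insert k t
      · rw [ES_col hx hj, hg i j (Or.inr hj)]
      · have hi : i ∉ insert k t := by tauto
        have h1 := ES_row hx hi 1 j
        rw [mul_one] at h1
        rw [SL_mul]
        simp only [fun c => hg i c (Or.inl hi)]
        rw [← Matrix.mul_apply, Matrix.one_mul]
        exact h1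
    obtain ⟨x, hx, hx'⟩ := row_reduce (Finset.mem_insert_self k t) k g
    have hg1 := step g x hx hg
    suffices g * x ∈ ES (Finset.univ : Finset ι) from
      (Subgroup.mul_mem_cancel_right _ (hmono _ hx)).1 this
    generalize g * x = g1 at hx' hg1
    have hrow : ∀ j, j ≠ k → g1 k j = 0 := by
      intro j hj
      by_cases hjs : j ∈ insert k t
      · exact hx' j hjs hj
      · rw [hg1 k j (Or.inr hjs), Matrix.one_apply_ne (Ne.symm hj)]
    obtain ⟨y, hy⟩ := row_bezout g1 k
    rw [Finset.sum_eq_single k (fun j _ hj => by rw [hrow j hj, zero_mul]) (by simp)] at hy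
    rcases Int.eq_one_or_neg_one_of_mul_eq_one hy with h1 | h1
    · apply fin g1 hg1
      intro j
      by_cases hj : j = k
      · subst hj; simp [h1]
      · rw [hrow j hj, Matrix.one_apply_ne (Ne.symm hj)]
    · rcases t.eq_empty_or_nonempty with rfl | ⟨l, hl⟩
      · exfalso
        have hd : g1.1 = Matrix.diagonal (fun i => if i = k then -1 else 1) := by
          ext i j
          by_cases hij : i = j
          · subst hij
            by_cases hi : i = k
            · subst hi; simpa using h1
            · have := hg1 i i (by simp [hi])
              simpa [hi] using this
          · rw [Matrix.diagonal_apply_ne _ hij]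
            have := hg1 i j (by simp; by_contra! h; exact hij (h.1.trans h.2.symm))
            rwa [Matrix.one_apply_ne hij] at this
        have := g1.2
        rw [hd, Matrix.det_diagonal] at this
        simp at this
      · have hlk : l ≠ k := by rintro rfl; exact hk hl
        have hls : l ∈ insert k t := Finset.mem_insert_of_mem hl
        have hks : k ∈ insert k t := Finset.mem_insert_self _ _
        have hxS : e hlk.symm (-1) * e hlk 2 * e hlk.symm (-1) ∈ ES (insert k t) :=
          mul_mem (mul_mem (e_mem_ES _ _ hks hls) (e_mem_ES _ _ hls hks)) (e_mem_ES _ _ hks hls)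
        refine (Subgroup.mul_mem_cancel_right _ (hmono _ hxS)).1 (fin _ (step _ _ hxS hg1) ?_)
        intro j
        rw [← mul_assoc, ← mul_assoc]
        by_cases hjk : j = k
        · subst hjk
          simp [e_right, hlk, hlk.symm, h1, hrow]
        · by_cases hjl : j = l
          · subst hjl
            simp [e_right, hlk, hlk.symm, h1, hrow]
          · simp [e_right, hjk, hjl, hrow, Matrix.one_apply_ne (Ne.symm hjk)]

lemma gen_top : ES (Finset.univ : Finset ι) = ⊤ :=
  (Subgroup.eq_top_iff' _).2 fun g => gen_aux Finset.univ g (by simp)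
lemma ES_cong_mem {m : ℕ} (g : SpecialLinearGroup ι ℤ) :
    g ∈ (SpecialLinearGroup.map (n := ι) (Int.castRingHom (ZMod m))).ker ↔
      ∀ i j, (m : ℤ) ∣ g i j - (1 : Matrix ι ι ℤ) i j := by
  rw [MonoidHom.mem_ker, Matrix.SpecialLinearGroup.ext_iff]
  refine forall_congr' fun i => forall_congr' fun j => ?_
  rw [← ZMod.intCast_zmod_eq_zero_iff_dvd, Int.cast_sub, sub_eq_zero]
  have : (1 : Matrix ι ι (ZMod m)) i j = (((1 : Matrix ι ι ℤ) i j : ℤ) : ZMod m) := by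
    rw [Matrix.one_apply, Matrix.one_apply]; split_ifs <;> simp
  rw [← this]
  rfl

lemma central (Q : Subgroup (SpecialLinearGroup ι ℤ)) [Q.Normal] (m : ℕ)
    (hQ : ∀ (i j : ι) (h : i ≠ j) (a : ℤ), (m : ℤ) ∣ a → e h a ∈ Q)
    (hι : 3 ≤ Fintype.card ι) :
    (SpecialLinearGroup.map (n := ι) (Int.castRingHom (ZMod m))).ker ≤
      (Subgroup.center (SpecialLinearGroup ι ℤ ⧸ Q)).comap (QuotientGroup.mk' Q) := by
  classical
  set Γ := (SpecialLinearGroup.map (n := ι) (Int.castRingHom (ZMod m))).ker with hΓ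
  set C := (Subgroup.center (SpecialLinearGroup ι ℤ ⧸ Q)).comap (QuotientGroup.mk' Q) with hC
  haveI : C.Normal := Subgroup.Normal.comap inferInstance _
  haveI : Γ.Normal := MonoidHom.normal_ker _
  have hQC : Q ≤ C := by
    intro x hx
    rw [hC, Subgroup.mem_comap]
    have : QuotientGroup.mk' Q x = 1 := (QuotientGroup.eq_one_iff x).2 hx
    rw [this]; exact one_mem _
  have heΓ : ∀ (i j : ι) (h : i ≠ j) (a : ℤ), (m : ℤ) ∣ a → e h a ∈ Γ := by
    intro i j h a ha
    rw [hΓ, ES_cong_mem]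
    intro r c
    have := e_right h a 1 r c
    rw [one_mul] at this
    rw [this]
    change (m : ℤ) ∣ (1 : Matrix ι ι ℤ) r c + _ - (1 : Matrix ι ι ℤ) r c
    rw [add_sub_cancel_left]
    split_ifs
    · exact ha.mul_right _
    · exact dvd_zero _
  have heT : ∀ (i j : ι) (h : i ≠ j) (a : ℤ), (m : ℤ) ∣ a → e h a ∈ Q ⊓ Γ :=
    fun i j h a ha => ⟨hQ i j h a ha, heΓ i j h a ha⟩
  obtain ⟨k, i0, i1, h0, h1, h01⟩ : ∃ k i0 i1 : ι, k ≠ i0 ∧ k ≠ i1 ∧ i0 ≠ i1 :=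
    Fintype.two_lt_card_iff.1 hι
  -- block matrices
  have blk : ∀ g ∈ Γ, (∀ j, g k j = (1 : Matrix ι ι ℤ) k j) →
      (∀ j, g j k = (1 : Matrix ι ι ℤ) j k) → g ∈ C := by
    intro g hg hr hc
    have hg' := (ES_cong_mem g).1 hg
    set D := (Subgroup.centralizer {QuotientGroup.mk' Q g}).comap (QuotientGroup.mk' Q) with hD
    have memD : ∀ x, x ∈ D ↔ ∃ u ∈ Q, x * g = u * (g * x) := by
      intro x
      rw [hD, Subgroup.mem_comap, Subgroup.mem_centralizer_singleton_iff, ← map_mul, ← map_mul]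
      constructor
      · intro h
        refine ⟨x * g * (g * x)⁻¹, ?_, by group⟩
        rw [← QuotientGroup.eq_one_iff]
        change QuotientGroup.mk' Q _ = 1
        rw [map_mul, map_inv, mul_inv_eq_one]
        first | exact h | exact h.symm
      · rintro ⟨u, hu, h⟩
        have hu1 : QuotientGroup.mk' Q u = 1 := (QuotientGroup.eq_one_iff u).2 hu
        rw [h, map_mul, hu1, one_mul]
    have hcol : ∀ i (h : i ≠ k) (a : ℤ), e h a ∈ D := by
      intro i h a
      rw [memD]
      obtain ⟨u, hu, hu'⟩ := colU Q k (fun r => if r = k then 0 else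
          -(a * (g r i - (1 : Matrix ι ι ℤ) r i))) (by simp)
        (fun r hrk => hQ _ _ _ _ (by
          simp only [hrk, if_false]
          exact ((hg' r i).mul_left a).neg_right))
      refine ⟨u, hu, ?_⟩
      apply Matrix.SpecialLinearGroup.ext
      intro r c
      rw [hu', e_left, e_right, e_right, hr c]
      by_cases hck : c = k
      · subst hck
        by_cases hrc : r = c
        · subst hrc; simp [h.symm, hr, h, hc]
        · by_cases hri : r = i
          · subst hri; simp [hrc, hc, hr, h.symm]; ring
          · simp [hrc, hri, hc, hr, h.symm]
      · by_cases hri : r = i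
        · subst hri; simp [hck, Ne.symm hck, hr]
        · simp [hck, Ne.symm hck, hri, hr]
    have hrow : ∀ i (h : k ≠ i) (a : ℤ), e h a ∈ D := by
      intro i h a
      have : ∃ u ∈ Q, e h a * g * u = g * e h a := by
        obtain ⟨u, hu, hu'⟩ := rowU Q k (fun r => if r = k then 0 else
            -(a * (g i r - (1 : Matrix ι ι ℤ) i r))) (by simp)
          (fun r hrk => hQ _ _ _ _ (by
            simp only [hrk.symm, if_false]
            exact ((hg' i r).mul_left a).neg_right))
        refine ⟨u, hu, ?_⟩
        apply Matrix.SpecialLinearGroup.ext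
        intro r c
        rw [hu', e_left, e_left, e_right, hc r]
        by_cases hck : r = k
        · subst hck
          by_cases hrc : c = r
          · subst hrc; simp [h.symm, hr, h, hc]
          · by_cases hri : c = i
            · subst hri; simp [hrc, hc, hr, h.symm]; ring
            · simp [hrc, hri, hc, hr, h.symm, Ne.symm hri, Ne.symm hrc]
        · by_cases hri : c = i
          · subst hri; simp [hck, hc]
          · simp [hck, hri, hc]
      obtain ⟨u, hu, h1⟩ := this
      rw [memD]
      refine ⟨(g * e h a) * u⁻¹ * (g * e h a)⁻¹, Subgroup.Normal.conj_mem inferInstance _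
        (inv_mem hu) _, ?_⟩
      rw [← h1]; group
    have hall : ES (Finset.univ : Finset ι) ≤ D := by
      rw [ES, Subgroup.closure_le]
      rintro _ ⟨i, j, h, a, -, -, rfl⟩
      by_cases hi : i = k
      · subst hi; exact hrow _ _ _
      · by_cases hj : j = k
        · subst hj; exact hcol _ _ _
        · have := e_heis hi (Ne.symm hj) h a 1
          rw [mul_one] at this
          have h2 : e h a = e hi a * e (Ne.symm hj) 1 * (e (Ne.symm hj) 1 * e hi a)⁻¹ := by
            rw [this]; group
          rw [h2]
          exact mul_mem (mul_mem (hcol _ _ _) (hrow _ _ _))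
            (inv_mem (mul_mem (hrow _ _ _) (hcol _ _ _)))
    rw [gen_top] at hall
    rw [hC, Subgroup.mem_comap, Subgroup.mem_center_iff]
    intro y
    obtain ⟨x, rfl⟩ := QuotientGroup.mk'_surjective Q y
    have := hall (Subgroup.mem_top x)
    rw [hD, Subgroup.mem_comap, Subgroup.mem_centralizer_singleton_iff] at this
    first | exact this | exact this.symm
  -- last entry one
  have one : ∀ g ∈ Γ, g k k = 1 → g ∈ C := by
    intro g hg hkk
    have hg' := (ES_cong_mem g).1 hg
    obtain ⟨u, hu, hu'⟩ := rowU (Q ⊓ Γ) k (fun r => if r = k then 0 else - g k r) (by simp)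
      (fun r hrk => heT _ _ _ _ (by
        have := hg' k r
        rw [Matrix.one_apply_ne hrk, sub_zero] at this
        simp only [hrk.symm, if_false]
        exact this.neg_right))
    have hrow : ∀ j, (g * u) k j = (1 : Matrix ι ι ℤ) k j := by
      intro j
      rw [hu', hkk]
      by_cases hj : j = k
      · subst hj; simp [hkk]
      · simp [hj, Matrix.one_apply_ne (Ne.symm hj)]
    have hgu : g * u ∈ Γ := mul_mem hg hu.2
    suffices g * u ∈ C from (Subgroup.mul_mem_cancel_right _ (hQC hu.1)).1 this
    generalize g * u = g1 at hrow hgu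
    have hg1 := (ES_cong_mem g1).1 hgu
    obtain ⟨v, hv, hv'⟩ := colU (Q ⊓ Γ) k (fun r => if r = k then 0 else - g1 r k) (by simp)
      (fun r hrk => heT _ _ _ _ (by
        have := hg1 r k
        rw [Matrix.one_apply_ne hrk, sub_zero] at this
        simp only [hrk, if_false]
        exact this.neg_right))
    refine (Subgroup.mul_mem_cancel_left _ (hQC hv.1)).1 (blk _ (mul_mem hv.2 hgu) ?_ ?_)
    · intro j
      rw [hv', hrow]; simp
    · intro j
      rw [hv', hrow]
      by_cases hj : j = k
      · subst hj; simp [hrow]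
      · simp [hj]
  have conj : ∀ x g, x⁻¹ * g * x ∈ C → g ∈ C := by
    intro x g h
    have := Subgroup.Normal.conj_mem inferInstance _ h x
    have h2 : x * (x⁻¹ * g * x) * x⁻¹ = g := by group
    rwa [h2] at this
  have conjΓ : ∀ x g, g ∈ Γ → x⁻¹ * g * x ∈ Γ := by
    intro x g h
    have := Subgroup.Normal.conj_mem inferInstance _ h x⁻¹
    rwa [inv_inv] at this
  intro g hg
  set s : Finset ι := Finset.univ.erase k with hs
  obtain ⟨x, hx, hx'⟩ := row_reduce (s := s) (k := i0) (by simp [hs, h0.symm]) k g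
  apply conj x
  have hg1 := conjΓ x g hg
  have hrow : ∀ j, j ≠ k → j ≠ i0 → (x⁻¹ * g * x) k j = 0 := by
    intro j hj hj0
    rw [mul_assoc, ES_row (inv_mem hx) (by simp [hs])]
    exact hx' j (by simp [hs, hj]) hj0
  generalize x⁻¹ * g * x = g1 at hg1 hrow
  have hd := (ES_cong_mem g1).1 hg1
  obtain ⟨d, hd0⟩ := hd k i0
  rw [Matrix.one_apply_ne h0, sub_zero] at hd0
  obtain ⟨t, ht⟩ := hd k k
  rw [Matrix.one_apply_eq] at ht
  obtain ⟨y, hy⟩ := row_bezout g1 k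
  have hy2 : g1 k k * y k + g1 k i0 * y i0 = 1 := by
    refine Eq.trans ?_ hy
    rw [← Finset.sum_subset (Finset.subset_univ {k, i0})]
    · rw [Finset.sum_pair h0]
    · intro j _ hj
      simp only [Finset.mem_insert, Finset.mem_singleton, not_or] at hj
      rw [hrow j hj.1 hj.2, zero_mul]
  have hm := heT k i1 h1 m dvd_rfl
  refine (Subgroup.mul_mem_cancel_right _ (hQC hm.1)).1 ?_
  have hg2 := mul_mem hg1 hm.2
  have r0 : (g1 * e h1 m) k i0 = g1 k i0 := by rw [e_right, if_neg h01, add_zero]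
  have rk : (g1 * e h1 m) k k = g1 k k := by rw [e_right, if_neg h1, add_zero]
  have r1 : (g1 * e h1 m) k i1 = m * g1 k k := by
    rw [e_right, if_pos rfl, hrow i1 h1.symm h01.symm, zero_add]
  generalize g1 * e h1 m = g2 at hg2 r0 rk r1
  apply conj (e h0.symm (-(t * m * y i0)) * e h1.symm (-(t * y k)))
  apply one _ (conjΓ _ _ hg2)
  rw [_root_.mul_inv_rev, SpecialLinearGroup.transvection_inv, SpecialLinearGroup.transvection_inv,
    mul_assoc, mul_assoc, e_left, if_neg h1, add_zero, e_left, if_neg h0, add_zero,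
    ← mul_assoc, e_right, if_pos rfl, e_right, if_pos rfl, e_right, if_neg h1.symm, add_zero,
    r0, rk, r1]
  linear_combination ht - t * m * hy2

open scoped commutatorElement in
lemma perfect (hι : 3 ≤ Fintype.card ι) : commutator (SpecialLinearGroup ι ℤ) = ⊤ := by
  rw [eq_top_iff, ← gen_top, ES, Subgroup.closure_le]
  rintro _ ⟨i, l, h, a, -, -, rfl⟩
  obtain ⟨j, hj⟩ : ∃ j, j ∉ ({i, l} : Finset ι) := by
    by_contra! hh
    have h3 := Finset.card_le_two (a := i) (b := l)
    rw [Finset.eq_univ_iff_forall.2 hh, Finset.card_univ] at h3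
    omega
  simp only [Finset.mem_insert, Finset.mem_singleton, not_or] at hj
  have := e_heis (Ne.symm hj.1) hj.2 h a 1
  rw [mul_one] at this
  have h2 : e h a = ⁅e (Ne.symm hj.1) a, e hj.2 1⁆ := by
    rw [commutatorElement_def, this]; group
  rw [h2]
  exact Subgroup.commutator_mem_commutator (Subgroup.mem_top _) (Subgroup.mem_top _)

open scoped commutatorElement in
lemma finite_of_center_perfect {G : Type*} [Group G] (hc : (Subgroup.center G).FiniteIndex)
    (hp : commutator G = ⊤) : Finite G := by
  have hfin : Finite (commutatorSet G) := by
    have hf : (commutatorSet G) ⊆ Set.range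
        (fun p : (G ⧸ Subgroup.center G) × (G ⧸ Subgroup.center G) => ⁅p.1.out, p.2.out⁆) := by
      rintro _ ⟨a, b, rfl⟩
      refine ⟨(a, b), ?_⟩
      obtain ⟨u, hu⟩ := QuotientGroup.mk_out_eq_mul (Subgroup.center G) a
      obtain ⟨v, hv⟩ := QuotientGroup.mk_out_eq_mul (Subgroup.center G) b
      have hu' := Subgroup.mem_center_iff.1 u.2
      have hv' := Subgroup.mem_center_iff.1 v.2
      change ⁅((a : G ⧸ Subgroup.center G)).out, ((b : G ⧸ Subgroup.center G)).out⁆ = ⁅a, b⁆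
      rw [hu, hv, commutatorElement_def, commutatorElement_def, _root_.mul_inv_rev,
        _root_.mul_inv_rev]
      generalize (u : G) = x at *
      generalize (v : G) = y at *
      calc a * x * (b * y) * (x⁻¹ * a⁻¹) * (y⁻¹ * b⁻¹)
          = a * (x * (b * y)) * (x⁻¹ * a⁻¹) * (y⁻¹ * b⁻¹) := by group
        _ = a * b * (y * a⁻¹) * (y⁻¹ * b⁻¹) := by rw [← hu' (b * y)]; group
        _ = a * b * a⁻¹ * b⁻¹ := by rw [← hv' a⁻¹]; group
    exact (Set.finite_range _).subset hf
  have : Finite (commutator G) := inferInstance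
  rw [hp] at this
  exact Finite.of_equiv _ (Subgroup.topEquiv (G := G)).toEquiv

lemma fin_index (Q : Subgroup (SpecialLinearGroup ι ℤ)) [Q.Normal] (m : ℕ) (hm : m ≠ 0)
    (hQ : ∀ (i j : ι) (h : i ≠ j) (a : ℤ), (m : ℤ) ∣ a → e h a ∈ Q)
    (hι : 3 ≤ Fintype.card ι) : Q.FiniteIndex := by
  have : NeZero m := ⟨hm⟩
  have hc := central Q m hQ hι
  have h1 : (SpecialLinearGroup.map (n := ι) (Int.castRingHom (ZMod m))).ker.FiniteIndex := by
    have : Finite (SpecialLinearGroup ι (ZMod m)) := inferInstance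
    exact Subgroup.finiteIndex_ker _
  have h2 := Subgroup.finiteIndex_of_le hc
  have h3 : (Subgroup.center (SpecialLinearGroup ι ℤ ⧸ Q)).FiniteIndex := by
    refine ⟨?_⟩
    rw [← Subgroup.index_comap_of_surjective _ (QuotientGroup.mk'_surjective Q)]
    exact h2.index_ne_zero
  have h4 : commutator (SpecialLinearGroup ι ℤ ⧸ Q) = ⊤ := by
    have := congrArg (Subgroup.map (QuotientGroup.mk' Q)) (perfect (ι := ι) hι)
    rw [commutator_def, Subgroup.map_commutator, ← MonoidHom.range_eq_map,
      MonoidHom.range_eq_top.2 (QuotientGroup.mk'_surjective Q)] at this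
    rw [commutator_def]; exact this
  have := finite_of_center_perfect h3 h4
  exact Subgroup.finiteIndex_of_finite_quotient

/-- Complexification of real invertible matrices as endomorphisms of `ℂ⁴`. -/
noncomputable def cx : GL (Fin 4) ℝ →* Module.End ℂ (Fin 4 → ℂ) :=
  ((Matrix.toLinAlgEquiv' (R := ℂ) (n := Fin 4)).toAlgHom.toRingHom.toMonoidHom.comp
    (Complex.ofRealHom.mapMatrix (m := Fin 4)).toMonoidHom).comp (Units.coeHom _)

lemma cx_inj (x : GL (Fin 4) ℝ) (h : cx x = 1) : x = 1 := by
  have h1 : (Matrix.toLinAlgEquiv' (R := ℂ) (n := Fin 4))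
      (Complex.ofRealHom.mapMatrix (x : Matrix (Fin 4) (Fin 4) ℝ)) = 1 := h
  have h2 : Complex.ofRealHom.mapMatrix (x : Matrix (Fin 4) (Fin 4) ℝ) = 1 := by
    apply (Matrix.toLinAlgEquiv' (R := ℂ) (n := Fin 4)).injective
    rw [h1, map_one]
  apply Units.ext
  apply Matrix.ext
  intro i j
  have h3 := congrFun (congrFun h2 i) j
  rw [← map_one (Complex.ofRealHom.mapMatrix (m := Fin 4))] at h3
  exact Complex.ofReal_injective h3

lemma main (hι : 5 ≤ Fintype.card ι) (H : Subgroup (SpecialLinearGroup ι ℤ))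
    (hH : H.FiniteIndex) (φ : H →* GL (Fin 4) ℝ) : (Set.range φ).Finite := by
  classical
  set N := H.normalCore with hN
  have hNf : N.FiniteIndex := inferInstance
  have hNn : N.Normal := inferInstance
  have hNH : N ≤ H := Subgroup.normalCore_le H
  set k := N.index with hk
  have hk0 : k ≠ 0 := hNf.index_ne_zero
  have hNe : ∀ (i j : ι) (h : i ≠ j) (a : ℤ), (k : ℤ) ∣ a → e h a ∈ N := by
    rintro i j h _ ⟨b, rfl⟩
    rw [← e_pow]
    exact Subgroup.pow_index_mem _ _
  have hcn : ∀ g x, x ∈ N → g * x * g⁻¹ ∈ N := fun g x hx => hNn.conj_mem x hx g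
  set m : ℕ := (24 * k ^ 2) ^ 2 with hm
  have hm0 : m ≠ 0 := by positivity
  set Q := ((φ.ker).map H.subtype).normalCore with hQ
  have key : ∀ (i j : ι) (h : i ≠ j), e h (m : ℤ) ∈ Q := by
    intro i j h g
    have hemN : e h (m : ℤ) ∈ N := hNe _ _ _ _ (by
      rw [hm]; push_cast
      exact ⟨24 * (24 * k ^ 3), by ring⟩)
    let F : SpecialLinearGroup ι ℤ → Module.End ℂ (Fin 4 → ℂ) := fun x =>
      if hx : x ∈ N then cx (φ ⟨g * x * g⁻¹, hNH (hcn g x hx)⟩) else 1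
    have hFe : ∀ x (hx : x ∈ N), F x = cx (φ ⟨g * x * g⁻¹, hNH (hcn g x hx)⟩) :=
      fun x hx => dif_pos hx
    have h1 := rep_kill (V := Fin 4 → ℂ) (by simp) hι N k hNe F
      (by
        rw [hFe 1 (one_mem _)]
        rw [← map_one cx, ← map_one φ]
        congr 2
        apply Subtype.ext
        simp)
      (by
        intro x hx y hy
        rw [hFe _ (mul_mem hx hy), hFe _ hx, hFe _ hy, ← map_mul, ← map_mul]
        congr 2
        apply Subtype.ext
        change g * (x * y) * g⁻¹ = (g * x * g⁻¹) * (g * y * g⁻¹)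
        group) i j h
    have h2 : ((24 * k ^ 2 : ℕ) ^ 2 : ℤ) = (m : ℤ) := by rw [hm]; push_cast; ring
    rw [h2, hFe _ hemN] at h1
    exact ⟨_, cx_inj _ h1, rfl⟩
  have hQe : ∀ (i j : ι) (h : i ≠ j) (a : ℤ), (m : ℤ) ∣ a → e h a ∈ Q := by
    rintro i j h _ ⟨b, rfl⟩
    have nat : ∀ c : ℕ, e h ((m : ℤ) * c) ∈ Q := by
      intro c
      rw [mul_comm, ← e_pow]
      exact pow_mem (key i j h) c
    obtain ⟨c, rfl | rfl⟩ := b.eq_nat_or_neg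
    · exact nat c
    · have : e h ((m : ℤ) * -(c : ℤ)) = (e h ((m : ℤ) * c))⁻¹ := by
        rw [eq_inv_iff_mul_eq_one, ← e_add, ← e_zero h]; congr 1; ring
      rw [this]; exact inv_mem (nat c)
  have hQf : Q.FiniteIndex := fin_index Q m hm0 hQe (by omega)
  have hKf : ((φ.ker).map H.subtype).FiniteIndex :=
    Subgroup.finiteIndex_of_le (Subgroup.normalCore_le _)
  have hker : φ.ker.FiniteIndex := by
    refine ⟨?_⟩
    intro h0
    apply hKf.index_ne_zero
    rw [Subgroup.index_map_subtype, h0, zero_mul]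
  have : Finite (H ⧸ φ.ker) := inferInstance
  have : Finite φ.range := Finite.of_equiv _ (QuotientGroup.quotientKerEquivRange φ).toEquiv
  have h := Set.toFinite (φ.range : Set (GL (Fin 4) ℝ))
  rwa [MonoidHom.coe_range] at h

end Elem

end SLn

/-- For `n ≥ 5` and any finite-index subgroup `H` of `SL(n, ℤ)`, every homomorphism
`H → GL(4, ℝ)` has finite image. -/
theorem stmt_13 (n : ℕ) (hn : 5 ≤ n) (H : Subgroup (SpecialLinearGroup (Fin n) ℤ))
    (hH : H.FiniteIndex) (φ : H →* GL (Fin 4) ℝ) :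
    (Set.range φ).Finite := by
  exact SLn.main (by simpa using hn) H hH φ
end
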